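/- arXiv:2104.02169 — 2 statements merged into one kernel-verified Lean document; each statement's English description precedes it below -/
import Mathlib

section
/- Emergence of the Euler nonlinearity from kinetic moments: let u : U → ℝ³ be differentiable at x ∈ U ⊂ ℝ³ with (∇·u)(x) = 0. Then for each i = 1,2,3, (1/2) Σ_{j=1}^3 ∂_{x_j} [ ∫_{ℝ³} (u(x)·v)² ( v_i v_j − (1/3) δ_{ij} |v|² ) μ(v) dv ] = (u·∇u)_i(x) − (1/3) ∂_{x_i} ( |u(x)|² ). -/
/-!
Since `∂_w μ = -⟪w, ·⟫ μ`, integrating by parts trades a factor `⟪w, v⟫` under a Gaussian integral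
for a derivative of the remaining factor (Stein's identity). Iterating gives Isserlis' formula
`∫ ⟪a, v⟫ ⟪b, v⟫ ⟪c, v⟫ ⟪d, v⟫ μ = ⟪a, b⟫ ⟪c, d⟫ + ⟪a, c⟫ ⟪b, d⟫ + ⟪a, d⟫ ⟪b, c⟫`, which turns the
kinetic moment into twice the traceless part of `u ⊗ u`. By the product rule
`div (u ⊗ u) = (u · ∇) u + (div u) u`, and the trace contributes the gradient of `‖u‖ ^ 2`.
-/

open MeasureTheory Real
open scoped RealInnerProductSpace

noncomputable section

/-- The global Maxwellian `μ(v) = (2π)^{−3/2} e^{−|v|²/2}`. -/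
def globalMaxwellian (v : EuclideanSpace ℝ (Fin 3)) : ℝ :=
  (2 * Real.pi) ^ (-(3 : ℝ) / 2) * Real.exp (-‖v‖ ^ 2 / 2)

section GaussianMoments

variable {E : Type*} [NormedAddCommGroup E] [InnerProductSpace ℝ E]

/-- The global Maxwellian of a Euclidean space of arbitrary finite dimension, that is, the density
of its standard Gaussian distribution; in infinite dimension `Module.finrank` is `0`. -/
def maxwellian (v : E) : ℝ :=
  (2 * π) ^ (-(Module.finrank ℝ E : ℝ) / 2) * exp (-‖v‖ ^ 2 / 2)

lemma globalMaxwellian_eq_maxwellian : globalMaxwellian = maxwellian := by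
  ext v
  simp [globalMaxwellian, maxwellian]

lemma hasFDerivAt_inner_right (a v : E) :
    HasFDerivAt (fun v => ⟪a, v⟫) (innerSL ℝ a) v :=
  (innerSL ℝ a).hasFDerivAt

lemma hasFDerivAt_maxwellian (v : E) :
    HasFDerivAt maxwellian (-maxwellian v • innerSL ℝ v) v := by
  have hexp : HasFDerivAt (fun v : E => exp (-‖v‖ ^ 2 / 2))
      (exp (-‖v‖ ^ 2 / 2) • (-(1 / 2 : ℝ)) • (2 • innerSL ℝ v)) v := by
    convert! ((hasStrictFDerivAt_norm_sq v).hasFDerivAt.const_mul (-(1 / 2 : ℝ))).exp using 3 <;>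
      ring
  convert! hexp.const_mul ((2 * π) ^ (-(Module.finrank ℝ E : ℝ) / 2)) using 1
  ext w
  simp only [maxwellian, neg_smul, neg_apply, smul_apply, coe_innerSL_apply, smul_eq_mul,
    nsmul_eq_mul, Nat.cast_ofNat]
  ring

lemma fderiv_maxwellian_apply (v w : E) :
    fderiv ℝ maxwellian v w = -(⟪w, v⟫ * maxwellian v) := by
  simp [(hasFDerivAt_maxwellian v).fderiv, real_inner_comm, mul_comm]

lemma one_add_pow_le_exp_sq (k : ℕ) {t : ℝ} (ht : 0 ≤ t) :
    (1 + t) ^ k ≤ k.factorial * exp 2 * exp (t ^ 2 / 4) := by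
  have hpow : (1 + t) ^ k ≤ k.factorial * exp (1 + t) := by
    have h := pow_div_factorial_le_exp (1 + t) (by positivity) k
    rwa [div_le_iff₀' (by positivity)] at h
  have hexponent : 1 + t ≤ 2 + t ^ 2 / 4 := by linarith [sq_nonneg (t / 2 - 1)]
  calc (1 + t) ^ k ≤ k.factorial * exp (1 + t) := hpow
    _ ≤ k.factorial * exp (2 + t ^ 2 / 4) := by gcongr
    _ = k.factorial * exp 2 * exp (t ^ 2 / 4) := by rw [exp_add, mul_assoc]

lemma hasTemperateGrowth_fderiv_apply {V F : Type*} [NormedAddCommGroup V] [NormedSpace ℝ V]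
    [NormedAddCommGroup F] [NormedSpace ℝ F] {f : V → F} (hf : f.HasTemperateGrowth) (w : V) :
    (fun v => fderiv ℝ f v w).HasTemperateGrowth := by
  have hfderiv : (fderiv ℝ f).HasTemperateGrowth := by
    refine ⟨hf.1.fderiv_right (by simp), fun n => ?_⟩
    simpa only [norm_iteratedFDeriv_fderiv] using hf.2 (n + 1)
  exact (ContinuousLinearMap.apply ℝ F w).hasTemperateGrowth.comp hfderiv

variable [FiniteDimensional ℝ E] [MeasurableSpace E] [BorelSpace E]

lemma integral_maxwellian : ∫ v : E, maxwellian v = 1 := by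
  have hgauss : ∫ v : E, exp (-‖v‖ ^ 2 / 2) = (2 * π) ^ ((Module.finrank ℝ E : ℝ) / 2) := by
    convert GaussianFourier.integral_rexp_neg_mul_sq_norm (V := E) one_half_pos using 2
    · ext v
      ring_nf
    · ring
  simp only [maxwellian]
  rw [integral_const_mul, hgauss, neg_div, rpow_neg (by positivity)]
  exact inv_mul_cancel₀ (by positivity)

lemma integrable_exp_neg_mul_sq_norm {b : ℝ} (hb : 0 < b) :
    Integrable fun v : E => exp (-b * ‖v‖ ^ 2) :=
  .of_integral_ne_zero <| by
    rw [GaussianFourier.integral_rexp_neg_mul_sq_norm hb]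
    positivity

lemma integrable_mul_maxwellian {f : E → ℝ} (hf : f.HasTemperateGrowth) :
    Integrable fun v => f v * maxwellian v := by
  obtain ⟨k, C, hC⟩ := hf.2 0
  simp only [norm_iteratedFDeriv_zero] at hC
  have hC₀ : 0 ≤ C := by simpa using (norm_nonneg _).trans (hC 0)
  have hf_cont : Continuous f := hf.1.continuous
  set A : ℝ := (2 * π) ^ (-(Module.finrank ℝ E : ℝ) / 2)
  have hcont : Continuous fun v => f v * maxwellian v := by
    unfold maxwellian
    fun_prop
  refine ((integrable_exp_neg_mul_sq_norm (E := E) (b := 1 / 4) (by norm_num)).const_mul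
    (C * (k.factorial * exp 2) * A)).mono' hcont.aestronglyMeasurable (.of_forall fun v => ?_)
  have hsplit : exp (-(1 / 4) * ‖v‖ ^ 2) = exp (‖v‖ ^ 2 / 4) * exp (-‖v‖ ^ 2 / 2) := by
    rw [← exp_add]
    ring_nf
  calc ‖f v * maxwellian v‖ = ‖f v‖ * (A * exp (-‖v‖ ^ 2 / 2)) := by
        rw [norm_mul, norm_of_nonneg (r := maxwellian v) (by unfold maxwellian; positivity)]
        rfl
    _ ≤ C * (k.factorial * exp 2 * exp (‖v‖ ^ 2 / 4)) * (A * exp (-‖v‖ ^ 2 / 2)) := by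
        grw [hC v, one_add_pow_le_exp_sq k (norm_nonneg v)]
    _ = C * (k.factorial * exp 2) * A * exp (-(1 / 4) * ‖v‖ ^ 2) := by
        rw [hsplit]
        ring

lemma integral_inner_mul_maxwellian {f : E → ℝ} (hf : f.HasTemperateGrowth) (w : E) :
    ∫ v, ⟪w, v⟫ * f v * maxwellian v = ∫ v, fderiv ℝ f v w * maxwellian v := by
  have hfderiv (v : E) : ⟪w, v⟫ * f v * maxwellian v = -(f v * fderiv ℝ maxwellian v w) := by
    rw [fderiv_maxwellian_apply]
    ring
  have hint : Integrable fun v => f v * fderiv ℝ maxwellian v w := by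
    simpa only [hfderiv, neg_neg] using
      (integrable_mul_maxwellian (f := fun v => ⟪w, v⟫ * f v) (by fun_prop)).fun_neg
  simp_rw [hfderiv]
  rw [integral_neg, integral_mul_fderiv_eq_neg_fderiv_mul_of_integrable
    (integrable_mul_maxwellian (hasTemperateGrowth_fderiv_apply hf w)) hint
    (integrable_mul_maxwellian hf) (fun v _ => hf.1.differentiable (by simp) v)
    (fun v _ => (hasFDerivAt_maxwellian v).differentiableAt), neg_neg]

lemma integral_inner_mul_inner_mul_maxwellian (a b : E) :
    ∫ v, ⟪a, v⟫ * ⟪b, v⟫ * maxwellian v = ⟪a, b⟫ := by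
  have hderiv (v : E) : fderiv ℝ (fun v => ⟪b, v⟫) v a = ⟪a, b⟫ := by
    rw [(hasFDerivAt_inner_right b v).fderiv, innerSL_apply_apply, real_inner_comm]
  rw [integral_inner_mul_maxwellian (by fun_prop)]
  simp_rw [hderiv]
  rw [integral_const_mul, integral_maxwellian, mul_one]

lemma integral_inner_mul_inner_mul_inner_mul_inner_mul_maxwellian (a b c d : E) :
    ∫ v, ⟪a, v⟫ * (⟪b, v⟫ * ⟪c, v⟫ * ⟪d, v⟫) * maxwellian v =
      ⟪a, b⟫ * ⟪c, d⟫ + ⟪a, c⟫ * ⟪b, d⟫ + ⟪a, d⟫ * ⟪b, c⟫ := by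
  have hderiv (v : E) : fderiv ℝ (fun v => ⟪b, v⟫ * ⟪c, v⟫ * ⟪d, v⟫) v a * maxwellian v =
      ⟪a, b⟫ * (⟪c, v⟫ * ⟪d, v⟫ * maxwellian v) + ⟪a, c⟫ * (⟪b, v⟫ * ⟪d, v⟫ * maxwellian v) +
        ⟪a, d⟫ * (⟪b, v⟫ * ⟪c, v⟫ * maxwellian v) := by
    rw [(((hasFDerivAt_inner_right b v).fun_mul (hasFDerivAt_inner_right c v)).fun_mul
      (hasFDerivAt_inner_right d v)).fderiv]
    simp only [add_apply, smul_apply, coe_innerSL_apply, real_inner_comm a, smul_eq_mul]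
    ring
  have hint (p q : E) : Integrable fun v => ⟪p, v⟫ * ⟪q, v⟫ * maxwellian v :=
    integrable_mul_maxwellian (by fun_prop)
  rw [integral_inner_mul_maxwellian (by fun_prop)]
  simp_rw [hderiv]
  rw [integral_add (((hint c d).const_mul _).fun_add ((hint b d).const_mul _))
      ((hint b c).const_mul _),
    integral_add ((hint c d).const_mul _) ((hint b d).const_mul _)]
  simp only [integral_const_mul, integral_inner_mul_inner_mul_maxwellian]

lemma integral_inner_sq_mul_inner_mul_inner_mul_maxwellian (w a b : E) :
    ∫ v, ⟪w, v⟫ ^ 2 * (⟪a, v⟫ * ⟪b, v⟫) * maxwellian v =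
      ‖w‖ ^ 2 * ⟪a, b⟫ + 2 * (⟪w, a⟫ * ⟪w, b⟫) := by
  calc ∫ v, ⟪w, v⟫ ^ 2 * (⟪a, v⟫ * ⟪b, v⟫) * maxwellian v
      = ∫ v, ⟪w, v⟫ * (⟪w, v⟫ * ⟪a, v⟫ * ⟪b, v⟫) * maxwellian v := by
        congr 1 with v
        ring
    _ = ‖w‖ ^ 2 * ⟪a, b⟫ + 2 * (⟪w, a⟫ * ⟪w, b⟫) := by
        rw [integral_inner_mul_inner_mul_inner_mul_inner_mul_maxwellian,
          real_inner_self_eq_norm_sq]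
        ring

lemma integral_inner_sq_mul_norm_sq_mul_maxwellian (w : E) :
    ∫ v, ⟪w, v⟫ ^ 2 * ‖v‖ ^ 2 * maxwellian v = (Module.finrank ℝ E + 2) * ‖w‖ ^ 2 := by
  let e := stdOrthonormalBasis ℝ E
  have hexpand (v : E) : ⟪w, v⟫ ^ 2 * ‖v‖ ^ 2 * maxwellian v =
      ∑ k, ⟪w, v⟫ ^ 2 * (⟪e k, v⟫ * ⟪e k, v⟫) * maxwellian v := by
    simp_rw [← Finset.sum_mul, ← Finset.mul_sum, ← sq, e.sum_sq_inner_right]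
  simp_rw [hexpand]
  rw [integral_finsetSum _ fun k _ => integrable_mul_maxwellian (by fun_prop)]
  simp_rw [integral_inner_sq_mul_inner_mul_inner_mul_maxwellian, ← sq, Finset.sum_add_distrib,
    ← Finset.mul_sum, e.sum_sq_inner_left, real_inner_self_eq_norm_sq, e.norm_eq_one]
  simp only [one_pow, Finset.sum_const, Finset.card_univ, Fintype.card_fin, nsmul_eq_mul, mul_one]
  ring

lemma integral_inner_sq_mul_traceless_mul_maxwellian [Nontrivial E] (w a b : E) :
    ∫ v, ⟪w, v⟫ ^ 2 * (⟪a, v⟫ * ⟪b, v⟫ - 1 / Module.finrank ℝ E * ⟪a, b⟫ * ‖v‖ ^ 2) *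
        maxwellian v =
      2 * (⟪w, a⟫ * ⟪w, b⟫ - 1 / Module.finrank ℝ E * ⟪a, b⟫ * ‖w‖ ^ 2) := by
  have hd : (Module.finrank ℝ E : ℝ) ≠ 0 := mod_cast Module.finrank_pos.ne'
  have hsplit (v : E) :
      ⟪w, v⟫ ^ 2 * (⟪a, v⟫ * ⟪b, v⟫ - 1 / Module.finrank ℝ E * ⟪a, b⟫ * ‖v‖ ^ 2) * maxwellian v =
        ⟪w, v⟫ ^ 2 * (⟪a, v⟫ * ⟪b, v⟫) * maxwellian v -
          1 / Module.finrank ℝ E * ⟪a, b⟫ * (⟪w, v⟫ ^ 2 * ‖v‖ ^ 2 * maxwellian v) := by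
    ring
  simp_rw [hsplit]
  rw [integral_sub (integrable_mul_maxwellian (by fun_prop))
      ((integrable_mul_maxwellian (by fun_prop)).const_mul _), integral_const_mul,
    integral_inner_sq_mul_inner_mul_inner_mul_maxwellian,
    integral_inner_sq_mul_norm_sq_mul_maxwellian]
  field_simp
  ring

end GaussianMoments

section EuclideanSpace

variable {ι : Type*} [Fintype ι] [DecidableEq ι]

lemma integral_inner_sq_mul_traceless_apply_mul_maxwellian (w : EuclideanSpace ℝ ι) (i j : ι) :
    ∫ v : EuclideanSpace ℝ ι, ⟪w, v⟫ ^ 2 *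
        (v i * v j - 1 / Fintype.card ι * (if i = j then (1 : ℝ) else 0) * ‖v‖ ^ 2) *
        maxwellian v =
      2 * (w i * w j - 1 / Fintype.card ι * (if i = j then (1 : ℝ) else 0) * ‖w‖ ^ 2) := by
  have : Nonempty ι := ⟨i⟩
  have h := integral_inner_sq_mul_traceless_mul_maxwellian w (EuclideanSpace.single i (1 : ℝ))
    (EuclideanSpace.single j 1)
  simpa [EuclideanSpace.inner_single_left, EuclideanSpace.inner_single_right,
    eq_comm (a := j) (b := i)] using h

lemma sum_fderiv_mul_apply_single {u : EuclideanSpace ℝ ι → EuclideanSpace ℝ ι}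
    {x : EuclideanSpace ℝ ι} {g : EuclideanSpace ℝ ι → ℝ} (hu : DifferentiableAt ℝ u x)
    (hg : DifferentiableAt ℝ g x) :
    ∑ j, fderiv ℝ (fun y => g y * u y j) x (EuclideanSpace.single j 1) =
      (∑ j, u x j * fderiv ℝ g x (EuclideanSpace.single j 1)) +
        g x * ∑ j, fderiv ℝ u x (EuclideanSpace.single j 1) j := by
  have hcoord (j : ι) : HasFDerivAt (fun y => u y j) (PiLp.proj 2 _ j ∘L fderiv ℝ u x) x :=
    HasFDerivAt.comp (g := fun w : EuclideanSpace ℝ ι => w j) x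
      (PiLp.hasFDerivAt_apply 2 (u x) j) hu.hasFDerivAt
  rw [Finset.mul_sum, ← Finset.sum_add_distrib]
  refine Finset.sum_congr rfl fun j _ => ?_
  rw [(hg.hasFDerivAt.fun_mul (hcoord j)).fderiv]
  simp [add_comm]

theorem euler_nonlinearity_from_moments_general
    {u : EuclideanSpace ℝ ι → EuclideanSpace ℝ ι} {x : EuclideanSpace ℝ ι}
    (hu : DifferentiableAt ℝ u x) (i : ι) :
    (1 / 2) * ∑ j,
        fderiv ℝ
          (fun y => ∫ v : EuclideanSpace ℝ ι,
            ⟪u y, v⟫ ^ 2 *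
              (v i * v j - 1 / Fintype.card ι * (if i = j then (1 : ℝ) else 0) * ‖v‖ ^ 2) *
              maxwellian v)
          x (EuclideanSpace.single j 1) =
      (∑ j, u x j * fderiv ℝ (fun y => u y i) x (EuclideanSpace.single j 1)) +
        u x i * (∑ j, fderiv ℝ u x (EuclideanSpace.single j 1) j) -
        1 / Fintype.card ι * fderiv ℝ (fun y => ‖u y‖ ^ 2) x (EuclideanSpace.single i 1) := by
  have hcoord := differentiableAt_euclidean.mp hu
  have hnorm : DifferentiableAt ℝ (fun y => ‖u y‖ ^ 2) x := hu.norm_sq ℝ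
  have hflux (j : ι) : DifferentiableAt ℝ (fun y => u y i * u y j) x :=
    (hcoord i).fun_mul (hcoord j)
  have hmoment (j : ι) :
      fderiv ℝ (fun y => 2 * (u y i * u y j -
          1 / Fintype.card ι * (if i = j then (1 : ℝ) else 0) * ‖u y‖ ^ 2)) x
          (EuclideanSpace.single j 1) =
        2 * (fderiv ℝ (fun y => u y i * u y j) x (EuclideanSpace.single j 1) -
          1 / Fintype.card ι * (if i = j then (1 : ℝ) else 0) *
            fderiv ℝ (fun y => ‖u y‖ ^ 2) x (EuclideanSpace.single j 1)) := by
    rw [fderiv_const_mul ((hflux j).fun_sub (hnorm.const_mul _)),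
      fderiv_fun_sub (hflux j) (hnorm.const_mul _), fderiv_const_mul hnorm]
    rfl
  simp_rw [integral_inner_sq_mul_traceless_apply_mul_maxwellian, hmoment]
  rw [← sum_fderiv_mul_apply_single hu (hcoord i)]
  simp [← Finset.mul_sum]

end EuclideanSpace

/-- Emergence of the Euler nonlinearity from kinetic moments: if `u` is differentiable at
`x` with `(∇·u)(x) = 0`, then for each `i`,
`(1/2) Σ_j ∂_{x_j} [ ∫ (u(x)·v)² ( v_i v_j − (1/3) δ_{ij} |v|² ) μ(v) dv ]
  = (u·∇u)_i(x) − (1/3) ∂_{x_i} |u(x)|²`. -/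
theorem euler_nonlinearity_from_moments
    (u : EuclideanSpace ℝ (Fin 3) → EuclideanSpace ℝ (Fin 3))
    (U : Set (EuclideanSpace ℝ (Fin 3))) (hU : IsOpen U)
    (x : EuclideanSpace ℝ (Fin 3)) (hx : x ∈ U)
    (hu : DifferentiableAt ℝ u x)
    (hdiv : ∑ j : Fin 3, fderiv ℝ u x (EuclideanSpace.single j 1) j = 0)
    (i : Fin 3) :
    (1 / 2) * ∑ j : Fin 3,
        fderiv ℝ
          (fun y => ∫ v : EuclideanSpace ℝ (Fin 3),
            ⟪u y, v⟫ ^ 2 *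
              (v i * v j - (1 / 3) * (if i = j then (1 : ℝ) else 0) * ‖v‖ ^ 2) *
              globalMaxwellian v)
          x (EuclideanSpace.single j 1) =
      (∑ j : Fin 3, u x j * fderiv ℝ (fun y => u y i) x (EuclideanSpace.single j 1)) -
        (1 / 3) * fderiv ℝ (fun y => ‖u y‖ ^ 2) x (EuclideanSpace.single i 1) := by
  simpa [globalMaxwellian_eq_maxwellian, hdiv] using euler_nonlinearity_from_moments_general hu i
end
end

section
/- Quantitative convergence of the heat flow of the Navier–Stokes–Fourier system to the transported heat of the Euler system: let Ω = 𝕋² × (0,∞) with 𝕋 = ℝ/2πℤ, let T > 0, κ > 0, η_c > 0, and let u, u_E : [0,T] × Ω̄ → ℝ³ and θ, θ_E : [0,T] × Ω̄ → ℝ be C¹ in t and C² in x, such that these functions and their first and second spatial derivatives are bounded by C e^{−c x₃} uniformly in t for some C, c > 0. Assume: (i) ∇·u = 0 in Ω and u = 0 on ∂Ω; (ii) ∂_t θ + u·∇θ − κη_c Δθ = 0 in Ω and θ = 0 on ∂Ω; (iii) ∂_t θ_E + u_E·∇θ_E = 0 in Ω and θ_E = 0 on ∂Ω; (iv) θ(0,·)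 = θ_E(0,·); (v) sup_{0≤t≤T} ‖∇θ_E(t)‖_{L^∞(Ω)} ≤ M and sup_{0≤t≤T} ‖Δθ_E(t)‖_{L²(Ω)} ≤ M. Then there is a constant C′ depending only on M and η_c such that sup_{0≤t≤T} ‖(θ − θ_E)(t)‖²_{L²(Ω)} ≤ C′ e^{C′ T} ( ∫₀^T ‖(u − u_E)(t)‖²_{L²(Ω)} dt + κ² T ). In particular, if ∫₀^T ‖u − u_E‖²_{L²(Ω)} dt → 0 as κ → 0, then sup_{0≤t≤T} ‖θ − θ_E‖_{L²(Ω)} → 0 as κ → 0. -/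
open MeasureTheory Real Set

noncomputable section

/-- The spatial domain `Ω = 𝕋² × (0,∞)`, modeled as the box `(0,2π)² × (0,∞) ⊂ ℝ³`
(functions on `Ω` are modeled as functions on `ℝ³` that are `2π`-periodic in `x₁, x₂`). -/
def channel : Set (EuclideanSpace ℝ (Fin 3)) :=
  {x | x 0 ∈ Ioo 0 (2 * Real.pi) ∧ x 1 ∈ Ioo 0 (2 * Real.pi) ∧ 0 < x 2}

/-- The closed half-space `{x₃ ≥ 0}`, modeling `Ω̄ = 𝕋² × [0,∞)`. -/
def upperHalfSpace : Set (EuclideanSpace ℝ (Fin 3)) := {x | 0 ≤ x 2}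

/-- `2π`-periodicity in the two horizontal variables. -/
def HorizontallyPeriodic {α : Type*} (f : EuclideanSpace ℝ (Fin 3) → α) : Prop :=
  (∀ x, f (x + (2 * Real.pi) • EuclideanSpace.single 0 (1 : ℝ)) = f x) ∧
  (∀ x, f (x + (2 * Real.pi) • EuclideanSpace.single 1 (1 : ℝ)) = f x)

/-- `C¹` in `t` and `C²` in `x` on `[0,T] × Ω̄`. -/
def RegC1C2 {F : Type*} [NormedAddCommGroup F] [NormedSpace ℝ F] (T : ℝ)
    (f : ℝ → EuclideanSpace ℝ (Fin 3) → F) : Prop :=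
  ContDiffOn ℝ 1 (fun p : ℝ × EuclideanSpace ℝ (Fin 3) => f p.1 p.2)
      (Icc 0 T ×ˢ upperHalfSpace) ∧
  ∀ t ∈ Icc (0 : ℝ) T, ContDiffOn ℝ 2 (f t) upperHalfSpace

/-- `f`, `∇f`, `∇²f` are bounded by `C e^{−c x₃}`, uniformly in `t ∈ [0,T]`. -/
def DecaysExp {F : Type*} [NormedAddCommGroup F] [NormedSpace ℝ F] (T C c : ℝ)
    (f : ℝ → EuclideanSpace ℝ (Fin 3) → F) : Prop :=
  ∀ t ∈ Icc (0 : ℝ) T, ∀ x : EuclideanSpace ℝ (Fin 3), 0 < x 2 →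
    ‖f t x‖ ≤ C * Real.exp (-c * x 2) ∧
    ‖fderiv ℝ (f t) x‖ ≤ C * Real.exp (-c * x 2) ∧
    ‖iteratedFDeriv ℝ 2 (f t) x‖ ≤ C * Real.exp (-c * x 2)

/-- The divergence `∇·f = Σᵢ ∂ᵢfᵢ`. -/
def div3 (f : EuclideanSpace ℝ (Fin 3) → EuclideanSpace ℝ (Fin 3))
    (x : EuclideanSpace ℝ (Fin 3)) : ℝ :=
  ∑ i : Fin 3, fderiv ℝ f x (EuclideanSpace.single i 1) i

/-- The Laplacian `Δf = Σᵢ ∂ᵢ²f`. -/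
def lap3 (f : EuclideanSpace ℝ (Fin 3) → ℝ) (x : EuclideanSpace ℝ (Fin 3)) : ℝ :=
  ∑ i : Fin 3,
    fderiv ℝ (fun y => fderiv ℝ f y (EuclideanSpace.single i 1)) x (EuclideanSpace.single i 1)

/-!
Energy estimate for `w = θ - θ_E`, which satisfies
`∂_t w = νΔw - u·∇w + νΔθ_E - (u - u_E)·∇θ_E` with `ν = κη_c`. After multiplication by `2w` the
transport term is the exact divergence of `-w²u`, because `u` is divergence free, and the diffusion
term is the exact divergence of `2νw∇w` up to the dissipation `-2ν|∇w|²`. Both fields are tangent to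
the boundary because `w` vanishes there, and they are periodic horizontally and decay vertically, so
these divergences integrate to zero over `Ω`. Young's inequality bounds the remaining terms by
`2w² + M²|u - u_E|² + ν²|Δθ_E|²`, and Grönwall's inequality concludes.
-/

open Asymptotics Filter Function Topology
open EuclideanSpace (single)
open scoped Gradient

local notation "ℝ³" => EuclideanSpace ℝ (Fin 3)

theorem le_exp_mul_of_deriv_le {f f' φ : ℝ → ℝ} {a b K : ℝ} (hK : 0 ≤ K) (hab : a ≤ b)
    (hf : ContinuousOn f (Icc a b)) (hf' : ∀ t ∈ Ioo a b, HasDerivAt f (f' t) t)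
    (hφ : IntegrableOn φ (Icc a b)) (hφ_nonneg : ∀ t ∈ Ioo a b, 0 ≤ φ t)
    (hle : ∀ t ∈ Ioo a b, f' t ≤ K * f t + φ t) :
    f b ≤ exp (K * (b - a)) * (f a + ∫ t in a..b, φ t) := by
  have hderiv : ∀ t ∈ Ioo a b, HasDerivAt (fun s => exp (-K * (s - a)) * f s)
      (exp (-K * (t - a)) * (f' t - K * f t)) t := fun t ht => by
    have hexp : HasDerivAt (fun s => exp (-K * (s - a))) (exp (-K * (t - a)) * -K) t := by
      simpa using (((hasDerivAt_id t).sub_const a).const_mul (-K)).exp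
    exact (hexp.mul (hf' t ht)).congr_deriv (by ring)
  have hderiv_le : ∀ t ∈ Ioo a b, exp (-K * (t - a)) * (f' t - K * f t) ≤ φ t := fun t ht => by
    have hexp_le : exp (-K * (t - a)) ≤ 1 :=
      exp_le_one_iff.2 (by nlinarith [mul_nonneg hK (sub_nonneg.2 ht.1.le)])
    calc exp (-K * (t - a)) * (f' t - K * f t) ≤ exp (-K * (t - a)) * φ t := by
          gcongr; linarith [hle t ht]
      _ ≤ φ t := mul_le_of_le_one_left (hφ_nonneg t ht) hexp_le
  have hbound := intervalIntegral.sub_le_integral_of_hasDeriv_right_of_le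
    (g := fun s => exp (-K * (s - a)) * f s) hab (by fun_prop)
    (fun t ht => (hderiv t ht).hasDerivWithinAt) hφ hderiv_le
  simp only [sub_self, mul_zero, exp_zero, one_mul, tsub_le_iff_left] at hbound
  calc f b = exp (K * (b - a)) * (exp (-K * (b - a)) * f b) := by
        rw [← mul_assoc, ← exp_add]; simp
    _ ≤ exp (K * (b - a)) * (f a + ∫ t in a..b, φ t) := by gcongr

theorem setIntegral_box_eq_zero_of_line {n : ℕ} {E : Type*} [NormedAddCommGroup E]
    [NormedSpace ℝ E] {s : Fin (n + 1) → Set ℝ} (i : Fin (n + 1))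
    {f : EuclideanSpace ℝ (Fin (n + 1)) → E} (hf : IntegrableOn f {x | ∀ j, x j ∈ s j})
    (hline : ∀ x : EuclideanSpace ℝ (Fin (n + 1)), x i = 0 → (∀ j ≠ i, x j ∈ s j) →
      ∫ r in s i, f (x + r • single i 1) = 0) :
    ∫ x in {x | ∀ j, x j ∈ s j}, f x = 0 := by
  let Φ := (MeasurableEquiv.piFinSuccAbove (fun _ => ℝ) i).symm.trans
    (MeasurableEquiv.toLp 2 (Fin (n + 1) → ℝ))
  have hΦ : MeasurePreserving Φ :=
    (PiLp.volume_preserving_toLp (Fin (n + 1))).comp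
      (volume_preserving_piFinSuccAbove (fun _ => ℝ) i).symm
  have hΦ_apply : ∀ r y, Φ (r, y) = WithLp.toLp 2 (i.insertNth (α := fun _ => ℝ) r y) :=
    fun _ _ => rfl
  have hpre : Φ ⁻¹' {x | ∀ j, x j ∈ s j} = s i ×ˢ univ.pi fun j => s (i.succAbove j) := by
    ext ⟨r, y⟩
    simp [hΦ_apply, Fin.forall_iff_succAbove i]
  have hΦ_line : ∀ r y, Φ (r, y) = Φ (0, y) + r • single i 1 := fun r y => by
    ext j
    rcases Fin.eq_self_or_eq_succAbove i j with rfl | ⟨k, rfl⟩ <;>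
      simp [hΦ_apply, Fin.succAbove_ne]
  rw [← hΦ.setIntegral_preimage_emb Φ.measurableEmbedding, hpre]
  have hint := (hΦ.integrableOn_comp_preimage Φ.measurableEmbedding).2 hf
  rw [hpre, Measure.volume_eq_prod] at hint
  rw [Measure.volume_eq_prod, ← setIntegral_prod_swap]
  refine (setIntegral_prod _ hint.swap).trans
    (setIntegral_eq_zero_of_forall_eq_zero fun y hy => ?_)
  refine (integral_congr_ae (.of_forall fun r => congrArg f (hΦ_line r y))).trans
    (hline (Φ (0, y)) (by simp [hΦ_apply]) fun j hj => ?_)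
  obtain ⟨k, rfl⟩ := Fin.exists_succAbove_eq hj
  simpa [hΦ_apply] using hy k (mem_univ k)

/-- The interior `{x₃ > 0}` of `upperHalfSpace`. -/
def openHalfSpace : Set ℝ³ := {x | 0 < x 2}

lemma isOpen_openHalfSpace : IsOpen openHalfSpace :=
  isOpen_lt continuous_const (by fun_prop)

lemma openHalfSpace_subset_upperHalfSpace : openHalfSpace ⊆ upperHalfSpace :=
  fun x (hx : 0 < x 2) => show 0 ≤ x 2 from hx.le

lemma upperHalfSpace_mem_nhds {x : ℝ³} (hx : x ∈ openHalfSpace) : upperHalfSpace ∈ 𝓝 x :=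
  mem_of_superset (isOpen_openHalfSpace.mem_nhds hx) openHalfSpace_subset_upperHalfSpace

lemma channel_subset_openHalfSpace : channel ⊆ openHalfSpace := fun _ hx => hx.2.2

/-- The factors of `channel`, seen as a box in `ℝ³`. -/
def channelSide : Fin 3 → Set ℝ := ![Ioo 0 (2 * π), Ioo 0 (2 * π), Ioi 0]

lemma channelSide_of_ne_two {i : Fin 3} (hi : i ≠ 2) : channelSide i = Ioo 0 (2 * π) := by
  fin_cases i <;> first | rfl | exact absurd rfl hi

lemma measurableSet_channelSide (i : Fin 3) : MeasurableSet (channelSide i) := by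
  fin_cases i
  exacts [measurableSet_Ioo, measurableSet_Ioo, measurableSet_Ioi]

lemma channel_eq_box : channel = {x | ∀ i, x i ∈ channelSide i} := by
  ext x
  simp [channel, channelSide, Fin.forall_fin_succ]

lemma measurableSet_channel : MeasurableSet channel := by
  rw [channel_eq_box, ofPred_forall]
  exact MeasurableSet.iInter fun i => (measurableSet_channelSide i).preimage (by fun_prop)

lemma ae_restrict_channel_mem_openHalfSpace :
    ∀ᵐ x ∂volume.restrict channel, x ∈ openHalfSpace :=
  (ae_restrict_mem measurableSet_channel).mono fun _ hx => channel_subset_openHalfSpace hx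

lemma aestronglyMeasurable_channel_of_continuousOn {F : Type*} [TopologicalSpace F]
    [TopologicalSpace.PseudoMetrizableSpace F] [SecondCountableTopology F] {f : ℝ³ → F}
    (hf : ContinuousOn f openHalfSpace) : AEStronglyMeasurable f (volume.restrict channel) :=
  (hf.mono channel_subset_openHalfSpace).aestronglyMeasurable measurableSet_channel

/-- The weight `e^{-c x₃}` of `DecaysExp`; spatial decay is expressed as
`f =O[𝓟 openHalfSpace] decayWeight c`. -/
def decayWeight (c : ℝ) (x : ℝ³) : ℝ := exp (-c * x 2)

section Decay

variable {c : ℝ}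

lemma decayWeight_isBigO_one (hc : 0 < c) :
    decayWeight c =O[𝓟 openHalfSpace] fun _ => (1 : ℝ) := by
  refine isBigO_principal.2 ⟨1, fun x hx => ?_⟩
  have hx : 0 < x 2 := hx
  simpa [decayWeight] using (mul_pos hc hx).le

lemma integrableOn_channel_decayWeight (hc : 0 < c) : IntegrableOn (decayWeight c) channel := by
  have hbox : IntegrableOn (fun y : Fin 3 → ℝ => exp (-c * y 2)) (univ.pi channelSide) := by
    rw [IntegrableOn, volume_pi, Measure.restrict_pi_pi]
    have hprod := Integrable.fintype_prod (𝕜 := ℝ) (ι := Fin 3)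
      (f := ![fun _ => 1, fun _ => 1, fun s => exp (-c * s)])
      (μ := fun i => volume.restrict (channelSide i)) fun i => by
        fin_cases i
        · simp [channelSide]
        · simp [channelSide]
        · exact exp_neg_integrableOn_Ioi 0 hc
    simpa [Fin.prod_univ_three] using hprod
  have hpre : channel = (WithLp.ofLp : ℝ³ → Fin 3 → ℝ) ⁻¹' univ.pi channelSide := by
    simp [channel_eq_box, Set.ext_iff]
  rw [hpre]
  exact ((PiLp.volume_preserving_ofLp (Fin 3)).integrableOn_comp_preimage
    (MeasurableEquiv.toLp 2 (Fin 3 → ℝ)).symm.measurableEmbedding).2 hbox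

lemma integrableOn_channel_of_isBigO {F : Type*} [NormedAddCommGroup F] (hc : 0 < c) {f : ℝ³ → F}
    (hm : AEStronglyMeasurable f (volume.restrict channel))
    (hf : f =O[𝓟 openHalfSpace] decayWeight c) : IntegrableOn f channel := by
  obtain ⟨K, hK⟩ := isBigO_principal.1 hf
  refine ((integrableOn_channel_decayWeight hc).norm.const_mul K).mono' hm ?_
  exact ae_restrict_channel_mem_openHalfSpace.mono hK

end Decay

namespace HorizontallyPeriodic

variable {α β γ : Type*} {f : ℝ³ → α}

lemma comp (hf : HorizontallyPeriodic f) (φ : α → β) : HorizontallyPeriodic fun x => φ (f x) :=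
  ⟨fun x => congrArg φ (hf.1 x), fun x => congrArg φ (hf.2 x)⟩

lemma map₂ (φ : α → β → γ) {g : ℝ³ → β} (hf : HorizontallyPeriodic f)
    (hg : HorizontallyPeriodic g) : HorizontallyPeriodic fun x => φ (f x) (g x) :=
  ⟨fun x => congrArg₂ φ (hf.1 x) (hg.1 x), fun x => congrArg₂ φ (hf.2 x) (hg.2 x)⟩

lemma add_single (hf : HorizontallyPeriodic f) {i : Fin 3} (hi : i ≠ 2) (x : ℝ³) :
    f (x + (2 * π) • single i 1) = f x := by
  fin_cases i
  exacts [hf.1 x, hf.2 x, absurd rfl hi]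

lemma fderiv {F : Type*} [NormedAddCommGroup F] [NormedSpace ℝ F] {f : ℝ³ → F}
    (hf : HorizontallyPeriodic f) : HorizontallyPeriodic (fderiv ℝ f) :=
  ⟨fun x => by rw [← fderiv_comp_add_right, funext hf.1],
    fun x => by rw [← fderiv_comp_add_right, funext hf.2]⟩

end HorizontallyPeriodic

lemma hasDerivAt_comp_add_smul {E F : Type*} [NormedAddCommGroup E] [NormedSpace ℝ E]
    [NormedAddCommGroup F] [NormedSpace ℝ F] {g : E → F} {x v : E} {r : ℝ}
    (hg : DifferentiableAt ℝ g (x + r • v)) :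
    HasDerivAt (fun s : ℝ => g (x + s • v)) (fderiv ℝ g (x + r • v) v) r :=
  hg.hasFDerivAt.comp_hasDerivAt r (by simpa using ((hasDerivAt_id r).smul_const v).const_add x)

section Divergence

variable {c : ℝ}

lemma integrableOn_channel_fderiv_apply (hc : 0 < c) {g : ℝ³ → ℝ} (v : ℝ³)
    (hg' : (fun x => fderiv ℝ g x v) =O[𝓟 openHalfSpace] decayWeight c) :
    IntegrableOn (fun x => fderiv ℝ g x v) channel :=
  integrableOn_channel_of_isBigO hc
    (measurable_fderiv_apply_const ℝ g v).aestronglyMeasurable hg'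

lemma integral_channel_fderiv_single_eq_zero_of_periodic (hc : 0 < c) {i : Fin 3} (hi : i ≠ 2)
    {g : ℝ³ → ℝ} (hg : DifferentiableOn ℝ g openHalfSpace)
    (hg' : (fun x => fderiv ℝ g x (single i 1)) =O[𝓟 openHalfSpace] decayWeight c)
    (hper : ∀ x, g (x + (2 * π) • single i 1) = g x) :
    ∫ x in channel, fderiv ℝ g x (single i 1) = 0 := by
  have hint := integrableOn_channel_fderiv_apply hc _ hg'
  rw [channel_eq_box] at hint ⊢
  refine setIntegral_box_eq_zero_of_line i hint fun x _ hx => ?_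
  have hx_two : 0 < x 2 := hx 2 hi.symm
  have hmem : ∀ r : ℝ, x + r • single i 1 ∈ openHalfSpace := fun r => by
    simpa [openHalfSpace, hi.symm] using hx_two
  have hline : IntervalIntegrable (fun r : ℝ => fderiv ℝ g (x + r • single i 1) (single i 1))
      volume 0 (2 * π) := by
    obtain ⟨K, hK⟩ := isBigO_principal.1 hg'
    refine (intervalIntegrable_const (c := K * ‖decayWeight c x‖)).mono_fun'
      ((measurable_fderiv_apply_const ℝ g _).comp (by fun_prop)).aestronglyMeasurable
      (.of_forall fun r => ?_)
    simpa [decayWeight, hi.symm] using hK _ (hmem r)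
  calc ∫ r in channelSide i, fderiv ℝ g (x + r • single i 1) (single i 1)
      = ∫ r in (0)..(2 * π), fderiv ℝ g (x + r • single i 1) (single i 1) := by
        rw [channelSide_of_ne_two hi, ← integral_Ioc_eq_integral_Ioo,
          ← intervalIntegral.integral_of_le (by positivity)]
    _ = g (x + (2 * π) • single i 1) - g (x + (0 : ℝ) • single i 1) :=
        intervalIntegral.integral_eq_sub_of_hasDerivAt (fun r _ => hasDerivAt_comp_add_smul
          (hg.differentiableAt (isOpen_openHalfSpace.mem_nhds (hmem r)))) hline
    _ = 0 := by simp [hper]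

lemma integral_channel_fderiv_single_two_eq_zero (hc : 0 < c) {g : ℝ³ → ℝ}
    (hg : DifferentiableOn ℝ g openHalfSpace) (hg_decay : g =O[𝓟 openHalfSpace] decayWeight c)
    (hg' : (fun x => fderiv ℝ g x (single 2 1)) =O[𝓟 openHalfSpace] decayWeight c)
    (hg_bdry : ∀ x, x 2 = 0 → g x = 0 ∧ ContinuousWithinAt g upperHalfSpace x) :
    ∫ x in channel, fderiv ℝ g x (single 2 1) = 0 := by
  have hint := integrableOn_channel_fderiv_apply hc _ hg'
  rw [channel_eq_box] at hint ⊢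
  refine setIntegral_box_eq_zero_of_line 2 hint fun (x : ℝ³) hx_two _ => ?_
  have hheight : ∀ r : ℝ, (x + r • single 2 1 : ℝ³) 2 = r := fun r => by simp [hx_two]
  have hweight : ∀ r, decayWeight c (x + r • single 2 1) = exp (-c * r) := fun r => by
    simp [decayWeight, hx_two]
  have hmem : MapsTo (fun r : ℝ => x + r • single 2 1) (Ioi 0) openHalfSpace := fun r hr =>
    show 0 < (x + r • single 2 1 : ℝ³) 2 from (hheight r).symm ▸ hr
  have hbdry := hg_bdry _ (hheight 0)
  have hcont : ContinuousWithinAt (fun r : ℝ => g (x + r • single 2 1)) (Ici 0) 0 :=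
    hbdry.2.comp (f := fun r : ℝ => x + r • single 2 1) (by fun_prop) fun r hr =>
      show 0 ≤ (x + r • single 2 1 : ℝ³) 2 from (hheight r).symm ▸ hr
  have hline : IntegrableOn (fun r : ℝ => fderiv ℝ g (x + r • single 2 1) (single 2 1))
      (Ioi 0) := by
    obtain ⟨K, hK⟩ := isBigO_principal.1 hg'
    refine ((exp_neg_integrableOn_Ioi 0 hc).const_mul K).mono'
      ((measurable_fderiv_apply_const ℝ g _).comp (by fun_prop)).aestronglyMeasurable
      ((ae_restrict_mem measurableSet_Ioi).mono fun r hr => ?_)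
    simpa [hweight] using hK _ (hmem hr)
  have hlim : Tendsto (fun r : ℝ => g (x + r • single 2 1)) atTop (𝓝 0) := by
    have hexp : Tendsto (fun r => exp (-c * r)) atTop (𝓝 0) :=
      tendsto_exp_atBot.comp (tendsto_id.const_mul_atTop_of_neg (neg_lt_zero.2 hc))
    simpa [comp_def, hweight] using (hg_decay.comp_tendsto
      (tendsto_principal.2 ((eventually_gt_atTop 0).mono hmem))).trans_tendsto
        (by simpa [comp_def, hweight] using hexp)
  have hFTC := integral_Ioi_of_hasDerivAt_of_tendsto hcont (fun r hr => hasDerivAt_comp_add_smul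
    (hg.differentiableAt (isOpen_openHalfSpace.mem_nhds (hmem hr)))) hline hlim
  exact hFTC.trans (by simpa using hbdry.1)

end Divergence

lemma fderiv_apply_coord {ι : Type*} [Finite ι] {E : Type*} [NormedAddCommGroup E]
    [NormedSpace ℝ E] {V : E → EuclideanSpace ℝ ι} {x : E} (hV : DifferentiableAt ℝ V x) (v : E)
    (i : ι) : fderiv ℝ (fun y => V y i) x v = fderiv ℝ V x v i :=
  have := Fintype.ofFinite ι
  congrArg (fun L : E →L[ℝ] ℝ => L v)
    ((EuclideanSpace.proj i : EuclideanSpace ℝ ι →L[ℝ] ℝ).hasFDerivAt.comp x hV.hasFDerivAt).fderiv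

lemma sum_coord_mul_apply_single {ι : Type*} [Fintype ι] [DecidableEq ι]
    (L : EuclideanSpace ℝ ι →L[ℝ] ℝ) (v : EuclideanSpace ℝ ι) :
    ∑ i, v i * L (single i 1) = L v := by
  simpa using congrArg L ((EuclideanSpace.basisFun ι ℝ).sum_repr v)

lemma div3_smul {f : ℝ³ → ℝ} {V : ℝ³ → ℝ³} {x : ℝ³} (hf : DifferentiableAt ℝ f x)
    (hV : DifferentiableAt ℝ V x) :
    div3 (fun y => f y • V y) x = f x * div3 V x + fderiv ℝ f x (V x) := by
  simp [div3, fderiv_fun_smul hf hV, ← sum_coord_mul_apply_single _ (V x), Finset.mul_sum,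
    Finset.sum_add_distrib, mul_comm]

lemma isBigO_apply_const {α E F : Type*} [NormedAddCommGroup E] [NormedSpace ℝ E]
    [NormedAddCommGroup F] [NormedSpace ℝ F] {l : Filter α} (L : α → E →L[ℝ] F) (v : E) :
    (fun a => L a v) =O[l] L :=
  (ContinuousLinearMap.apply ℝ F v).isBigO_comp L l

/-- A horizontally periodic vector field that decays like `e^{-c x₃}` together with its derivative
and whose normal component vanishes continuously on `{x₃ = 0}`: no flux leaves `Ω` through its
boundary, so the integral of the divergence vanishes. -/
structure ImpermeableField (c : ℝ) (V : ℝ³ → ℝ³) : Prop where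
  differentiableOn : DifferentiableOn ℝ V openHalfSpace
  periodic : HorizontallyPeriodic V
  isBigO : V =O[𝓟 openHalfSpace] decayWeight c
  fderiv_isBigO : fderiv ℝ V =O[𝓟 openHalfSpace] decayWeight c
  normal_boundary : ∀ x, x 2 = 0 →
    V x 2 = 0 ∧ ContinuousWithinAt (fun y => V y 2) upperHalfSpace x

namespace ImpermeableField

variable {c : ℝ} {V : ℝ³ → ℝ³}

lemma differentiableAt (hV : ImpermeableField c V) {x : ℝ³} (hx : x ∈ openHalfSpace) :
    DifferentiableAt ℝ V x :=
  hV.differentiableOn.differentiableAt (isOpen_openHalfSpace.mem_nhds hx)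

lemma fderiv_coord_isBigO (hV : ImpermeableField c V) (i : Fin 3) :
    (fun x => fderiv ℝ (fun y => V y i) x (single i 1)) =O[𝓟 openHalfSpace] decayWeight c :=
  (((EuclideanSpace.proj i : ℝ³ →L[ℝ] ℝ).isBigO_comp _ _).trans
    ((isBigO_apply_const _ (single i 1)).trans hV.fderiv_isBigO)).congr'
      (eventuallyEq_principal.2 fun _ hx => (fderiv_apply_coord (hV.differentiableAt hx) _ i).symm)
      .rfl

lemma div3_ae_eq_sum (hV : ImpermeableField c V) :
    div3 V =ᵐ[volume.restrict channel] fun x =>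
      ∑ i, fderiv ℝ (fun y => V y i) x (single i 1) :=
  ae_restrict_channel_mem_openHalfSpace.mono fun _ hx =>
    Finset.sum_congr rfl fun i _ => (fderiv_apply_coord (hV.differentiableAt hx) _ i).symm

lemma integrableOn_div3 (hV : ImpermeableField c V) (hc : 0 < c) :
    IntegrableOn (div3 V) channel :=
  (integrable_finsetSum _ fun i _ =>
    integrableOn_channel_fderiv_apply hc _ (hV.fderiv_coord_isBigO i)).congr
      hV.div3_ae_eq_sum.symm

theorem integral_div3_eq_zero (hV : ImpermeableField c V) (hc : 0 < c) :
    ∫ x in channel, div3 V x = 0 := by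
  have hdiff : ∀ i, DifferentiableOn ℝ (fun y => V y i) openHalfSpace := fun i =>
    (EuclideanSpace.proj i : ℝ³ →L[ℝ] ℝ).differentiable.comp_differentiableOn hV.differentiableOn
  rw [integral_congr_ae hV.div3_ae_eq_sum, integral_finsetSum _ fun i _ =>
    integrableOn_channel_fderiv_apply hc _ (hV.fderiv_coord_isBigO i)]
  refine Finset.sum_eq_zero fun i _ => ?_
  by_cases hi : i = 2
  · subst hi
    exact integral_channel_fderiv_single_two_eq_zero hc (hdiff 2)
      (((EuclideanSpace.proj 2 : ℝ³ →L[ℝ] ℝ).isBigO_comp V _).trans hV.isBigO)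
      (hV.fderiv_coord_isBigO 2) hV.normal_boundary
  · exact integral_channel_fderiv_single_eq_zero_of_periodic hc hi (hdiff i)
      (hV.fderiv_coord_isBigO i) ((hV.periodic.comp fun v => v i).add_single hi)

theorem of_smul {f : ℝ³ → ℝ} (hf : DifferentiableOn ℝ f openHalfSpace)
    (hf_cont : ContinuousOn f upperHalfSpace) (hf_bdry : ∀ x, x 2 = 0 → f x = 0)
    (hf_per : HorizontallyPeriodic f) (hf_decay : f =O[𝓟 openHalfSpace] decayWeight c)
    (hf' : fderiv ℝ f =O[𝓟 openHalfSpace] decayWeight c)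
    (hV : DifferentiableOn ℝ V openHalfSpace) (hV_per : HorizontallyPeriodic V)
    (hV_bdd : V =O[𝓟 openHalfSpace] fun _ => (1 : ℝ))
    (hV' : fderiv ℝ V =O[𝓟 openHalfSpace] fun _ => (1 : ℝ)) :
    ImpermeableField c fun x => f x • V x where
  differentiableOn := hf.smul hV
  periodic := hf_per.map₂ (· • ·) hV_per
  isBigO := by simpa using hf_decay.smul hV_bdd
  fderiv_isBigO := by
    have hrank_one : (fun x => (fderiv ℝ f x).smulRight (V x)) =O[𝓟 openHalfSpace]
        decayWeight c := .of_norm_left (by simpa using hf'.norm_left.mul hV_bdd.norm_left)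
    have hprod : (fun x => f x • fderiv ℝ V x + (fderiv ℝ f x).smulRight (V x))
        =O[𝓟 openHalfSpace] decayWeight c :=
      .add (by simpa using hf_decay.smul hV') hrank_one
    refine hprod.congr' (eventuallyEq_principal.2 fun x hx => (fderiv_fun_smul ?_ ?_).symm) .rfl
    exacts [hf.differentiableAt (isOpen_openHalfSpace.mem_nhds hx),
      hV.differentiableAt (isOpen_openHalfSpace.mem_nhds hx)]
  normal_boundary x hx := by
    have hzero : f x * V x 2 = 0 := by simp [hf_bdry x hx]
    have hflux : (fun y => f y * V y 2) =O[𝓟 upperHalfSpace] f := by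
      obtain ⟨K, hK⟩ := isBigO_principal.1
        (((EuclideanSpace.proj 2 : ℝ³ →L[ℝ] ℝ).isBigO_comp V _).trans hV_bdd)
      refine isBigO_principal.2 ⟨K, fun y hy => ?_⟩
      rcases (show 0 ≤ y 2 from hy).eq_or_lt with h | h
      · simp [hf_bdry y h.symm]
      · simpa [mul_comm] using mul_le_mul_of_nonneg_left (hK y h) (norm_nonneg (f y))
    have hlim : Tendsto f (𝓝[upperHalfSpace] x) (𝓝 0) := by
      simpa [ContinuousWithinAt, hf_bdry x hx] using hf_cont x hx.ge
    have hflux_lim : Tendsto (fun y => f y * V y 2) (𝓝[upperHalfSpace] x) (𝓝 (f x * V x 2)) :=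
      hzero.symm ▸ (hflux.mono inf_le_right).trans_tendsto hlim
    exact ⟨hzero, hflux_lim⟩

end ImpermeableField

lemma gradient_coord {ι : Type*} [Fintype ι] [DecidableEq ι] (f : EuclideanSpace ℝ ι → ℝ)
    (x : EuclideanSpace ℝ ι) (i : ι) : ∇ f x i = fderiv ℝ f x (single i 1) := by
  rw [← inner_gradient_left, EuclideanSpace.inner_single_right]
  simp

section Gradient

variable {E : Type*} [NormedAddCommGroup E] [InnerProductSpace ℝ E] [CompleteSpace E]

lemma norm_gradient (f : E → ℝ) (x : E) : ‖∇ f x‖ = ‖fderiv ℝ f x‖ :=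
  (InnerProductSpace.toDual ℝ E).symm.norm_map _

lemma norm_fderiv_gradient (f : E → ℝ) (x : E) :
    ‖fderiv ℝ (∇ f) x‖ = ‖iteratedFDeriv ℝ 2 f x‖ := by
  rw [← norm_iteratedFDeriv_fderiv, norm_iteratedFDeriv_one, ← norm_iteratedFDeriv_one (∇ f),
    ← norm_iteratedFDeriv_one (fderiv ℝ f)]
  exact (InnerProductSpace.toDual ℝ E).symm.norm_iteratedFDeriv_comp_left _ x 1

lemma fderiv_gradient_self (f : E → ℝ) (x : E) : fderiv ℝ f x (∇ f x) = ‖fderiv ℝ f x‖ ^ 2 := by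
  rw [← norm_gradient, ← real_inner_self_eq_norm_sq, inner_gradient_left]

lemma differentiableAt_gradient {f : E → ℝ} {x : E} (hf : ContDiffAt ℝ 2 f x) :
    DifferentiableAt ℝ (∇ f) x :=
  (InnerProductSpace.toDual ℝ E).symm.differentiableAt.comp x
    ((hf.fderiv_right (m := 1) (by norm_num)).differentiableAt one_ne_zero)

end Gradient

lemma div3_gradient {f : ℝ³ → ℝ} {x : ℝ³} (hf : ContDiffAt ℝ 2 f x) :
    div3 (∇ f) x = lap3 f x :=
  Finset.sum_congr rfl fun i _ => by
    simp_rw [← fderiv_apply_coord (differentiableAt_gradient hf), gradient_coord]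

lemma lap3_eq_sum_iteratedFDeriv {f : ℝ³ → ℝ} {x : ℝ³} (hf : ContDiffAt ℝ 2 f x) :
    lap3 f x = ∑ i : Fin 3, iteratedFDeriv ℝ 2 f x ![single i 1, single i 1] := by
  have hf' := (hf.fderiv_right (m := 1) (by norm_num)).differentiableAt one_ne_zero
  simp [lap3, iteratedFDeriv_two_apply, fderiv_clm_apply hf' (differentiableAt_const _)]

lemma lap3_sub {f g : ℝ³ → ℝ} {x : ℝ³} (hf : ContDiffAt ℝ 2 f x) (hg : ContDiffAt ℝ 2 g x) :
    lap3 (f - g) x = lap3 f x - lap3 g x := by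
  have hsub : iteratedFDeriv ℝ 2 (f - g) x = iteratedFDeriv ℝ 2 f x - iteratedFDeriv ℝ 2 g x :=
    iteratedFDeriv_sub_apply (mod_cast hf) (mod_cast hg)
  have hfg : ContDiffAt ℝ 2 (f - g) x := hf.sub hg
  simp [lap3_eq_sum_iteratedFDeriv hfg, lap3_eq_sum_iteratedFDeriv hf,
    lap3_eq_sum_iteratedFDeriv hg, hsub]

lemma norm_lap3_le {f : ℝ³ → ℝ} {x : ℝ³} (hf : ContDiffAt ℝ 2 f x) :
    ‖lap3 f x‖ ≤ 3 * ‖iteratedFDeriv ℝ 2 f x‖ := by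
  rw [lap3_eq_sum_iteratedFDeriv hf]
  have hterm : ∀ i ∈ Finset.univ, ‖iteratedFDeriv ℝ 2 f x ![single i 1, single i 1]‖
      ≤ ‖iteratedFDeriv ℝ 2 f x‖ := fun i _ => by
    simpa [Fin.prod_univ_two] using (iteratedFDeriv ℝ 2 f x).le_opNorm ![single i 1, single i 1]
  simpa using norm_sum_le_of_le _ hterm

lemma measurable_lap3 (f : ℝ³ → ℝ) : Measurable (lap3 f) :=
  Finset.measurable_sum _ fun _ _ => measurable_fderiv_apply_const ℝ _ _

/-- The spatial regularity of the velocity that the energy estimate uses: a bounded,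
horizontally periodic, divergence-free field with bounded derivative. -/
structure IncompressibleFlow (u : ℝ³ → ℝ³) : Prop where
  differentiableOn : DifferentiableOn ℝ u openHalfSpace
  periodic : HorizontallyPeriodic u
  isBigO_one : u =O[𝓟 openHalfSpace] fun _ => (1 : ℝ)
  fderiv_isBigO_one : fderiv ℝ u =O[𝓟 openHalfSpace] fun _ => (1 : ℝ)
  div3_eq_zero : ∀ x ∈ openHalfSpace, div3 u x = 0

/-- A horizontally periodic `C²` function on `Ω̄` that vanishes on `{x₃ = 0}` and decays like
`e^{-c x₃}` together with its first two derivatives: a temperature at a fixed time. -/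
structure DirichletProfile (c : ℝ) (f : ℝ³ → ℝ) : Prop where
  contDiffOn : ContDiffOn ℝ 2 f upperHalfSpace
  periodic : HorizontallyPeriodic f
  eq_zero_of_boundary : ∀ x, x 2 = 0 → f x = 0
  isBigO : f =O[𝓟 openHalfSpace] decayWeight c
  fderiv_isBigO : fderiv ℝ f =O[𝓟 openHalfSpace] decayWeight c
  iteratedFDeriv_isBigO : iteratedFDeriv ℝ 2 f =O[𝓟 openHalfSpace] decayWeight c

namespace DirichletProfile

variable {c : ℝ} {f : ℝ³ → ℝ}

lemma contDiffAt (hf : DirichletProfile c f) {x : ℝ³} (hx : x ∈ openHalfSpace) :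
    ContDiffAt ℝ 2 f x :=
  hf.contDiffOn.contDiffAt (upperHalfSpace_mem_nhds hx)

lemma differentiableAt (hf : DirichletProfile c f) {x : ℝ³} (hx : x ∈ openHalfSpace) :
    DifferentiableAt ℝ f x :=
  (hf.contDiffAt hx).differentiableAt two_ne_zero

lemma differentiableOn (hf : DirichletProfile c f) : DifferentiableOn ℝ f openHalfSpace :=
  fun _ hx => (hf.differentiableAt hx).differentiableWithinAt

lemma sub {g : ℝ³ → ℝ} (hf : DirichletProfile c f) (hg : DirichletProfile c g) :
    DirichletProfile c (f - g) where
  contDiffOn := hf.contDiffOn.sub hg.contDiffOn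
  periodic := hf.periodic.map₂ (· - ·) hg.periodic
  eq_zero_of_boundary x hx := by simp [hf.eq_zero_of_boundary x hx, hg.eq_zero_of_boundary x hx]
  isBigO := hf.isBigO.sub hg.isBigO
  fderiv_isBigO := (hf.fderiv_isBigO.sub hg.fderiv_isBigO).congr' (eventuallyEq_principal.2
    fun _ hx => (fderiv_sub (hf.differentiableAt hx) (hg.differentiableAt hx)).symm) .rfl
  iteratedFDeriv_isBigO := (hf.iteratedFDeriv_isBigO.sub hg.iteratedFDeriv_isBigO).congr'
    (eventuallyEq_principal.2 fun _ hx => (iteratedFDeriv_sub_apply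
      (mod_cast hf.contDiffAt hx) (mod_cast hg.contDiffAt hx)).symm) .rfl

lemma impermeableField_smul_gradient (hf : DirichletProfile c f) (hc : 0 < c) :
    ImpermeableField c fun x => f x • ∇ f x :=
  .of_smul hf.differentiableOn hf.contDiffOn.continuousOn hf.eq_zero_of_boundary hf.periodic
    hf.isBigO hf.fderiv_isBigO
    (fun _ hx => (differentiableAt_gradient (hf.contDiffAt hx)).differentiableWithinAt)
    (hf.periodic.fderiv.comp (InnerProductSpace.toDual ℝ ℝ³).symm)
    ((isBigO_of_le _ fun x => (norm_gradient f x).le).trans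
      (hf.fderiv_isBigO.trans (decayWeight_isBigO_one hc)))
    ((isBigO_of_le _ fun x => (norm_fderiv_gradient f x).le).trans
      (hf.iteratedFDeriv_isBigO.trans (decayWeight_isBigO_one hc)))

lemma div3_smul_gradient (hf : DirichletProfile c f) {x : ℝ³} (hx : x ∈ openHalfSpace) :
    div3 (fun y => f y • ∇ f y) x = f x * lap3 f x + ‖fderiv ℝ f x‖ ^ 2 := by
  have hfx := hf.contDiffAt hx
  rw [div3_smul (hf.differentiableAt hx) (differentiableAt_gradient hfx), div3_gradient hfx,
    fderiv_gradient_self]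

lemma fderiv_sq (hf : DirichletProfile c f) {x : ℝ³} (hx : x ∈ openHalfSpace) :
    fderiv ℝ (fun y => f y ^ 2) x = (2 * f x) • fderiv ℝ f x := by
  simpa using ((hf.differentiableAt hx).hasFDerivAt.pow 2).fderiv

lemma impermeableField_sq_smul (hf : DirichletProfile c f) (hc : 0 < c) {u : ℝ³ → ℝ³}
    (hu : IncompressibleFlow u) : ImpermeableField c fun x => f x ^ 2 • u x := by
  have hf_bdd := hf.isBigO.trans (decayWeight_isBigO_one hc)
  have hsq : (fun x => f x ^ 2) =O[𝓟 openHalfSpace] decayWeight c := by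
    simpa [sq] using hf.isBigO.mul hf_bdd
  have hsq' : fderiv ℝ (fun x => f x ^ 2) =O[𝓟 openHalfSpace] decayWeight c :=
    IsBigO.congr' (by simpa using (hf_bdd.const_mul_left 2).smul hf.fderiv_isBigO)
      (eventuallyEq_principal.2 fun x hx => (hf.fderiv_sq hx).symm) .rfl
  exact .of_smul (hf.differentiableOn.pow 2) (hf.contDiffOn.continuousOn.pow 2)
    (fun x hx => by simp [hf.eq_zero_of_boundary x hx]) (hf.periodic.comp (· ^ 2)) hsq hsq'
    hu.differentiableOn hu.periodic hu.isBigO_one hu.fderiv_isBigO_one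

lemma div3_sq_smul (hf : DirichletProfile c f) {u : ℝ³ → ℝ³} (hu : IncompressibleFlow u) {x : ℝ³}
    (hx : x ∈ openHalfSpace) :
    div3 (fun y => f y ^ 2 • u y) x = 2 * f x * fderiv ℝ f x (u x) := by
  rw [div3_smul (f := fun y => f y ^ 2) ((hf.differentiableAt hx).pow 2)
    (hu.differentiableOn.differentiableAt (isOpen_openHalfSpace.mem_nhds hx)),
    hu.div3_eq_zero x hx, hf.fderiv_sq hx]
  simp

end DirichletProfile

/-- `f t x = O(g x)` on `Ω`, uniformly in `t ∈ [0,T]`: exponential decay is the case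
`g = decayWeight c`, boundedness the case `g = 1`. -/
def IsUniformlyBigO {F : Type*} [Norm F] (T : ℝ) (f : ℝ → ℝ³ → F) (g : ℝ³ → ℝ) : Prop :=
  (fun p : ℝ × ℝ³ => f p.1 p.2) =O[𝓟 (Icc 0 T ×ˢ openHalfSpace)] fun p => g p.2

section TimeDependent

variable {T c : ℝ} {F : Type*} [NormedAddCommGroup F]

namespace IsUniformlyBigO

variable {f : ℝ → ℝ³ → F} {g : ℝ³ → ℝ}

lemma exists_bound (hf : IsUniformlyBigO T f g) :
    ∃ K, ∀ t ∈ Icc 0 T, ∀ x ∈ openHalfSpace, ‖f t x‖ ≤ K * ‖g x‖ := by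
  obtain ⟨K, hK⟩ := isBigO_principal.1 hf
  exact ⟨K, fun t ht x hx => hK (t, x) ⟨ht, hx⟩⟩

lemma isBigO (hf : IsUniformlyBigO T f g) {t : ℝ} (ht : t ∈ Icc 0 T) :
    f t =O[𝓟 openHalfSpace] g := by
  obtain ⟨K, hK⟩ := hf.exists_bound
  exact isBigO_principal.2 ⟨K, hK t ht⟩

lemma bounded (hf : IsUniformlyBigO T f (decayWeight c)) (hc : 0 < c) :
    IsUniformlyBigO T f fun _ => 1 :=
  hf.trans ((decayWeight_isBigO_one hc).comp_tendsto
    (tendsto_principal_principal.2 fun _ hp => hp.2))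

lemma norm_sq (hf : IsUniformlyBigO T f (decayWeight c)) (hc : 0 < c) :
    IsUniformlyBigO T (fun t x => ‖f t x‖ ^ 2) (decayWeight c) := by
  simpa [IsUniformlyBigO, sq] using hf.norm_left.mul (hf.bounded hc).norm_left

end IsUniformlyBigO

lemma continuousOn_channel_slice {f : ℝ → ℝ³ → F}
    (hf : ContinuousOn (fun p : ℝ × ℝ³ => f p.1 p.2) (Icc 0 T ×ˢ upperHalfSpace)) {t : ℝ}
    (ht : t ∈ Icc 0 T) : ContinuousOn (f t) openHalfSpace :=
  hf.comp (f := fun x => (t, x)) (by fun_prop) fun _ hx =>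
    ⟨ht, openHalfSpace_subset_upperHalfSpace hx⟩

lemma integrableOn_channel_norm_sq [SecondCountableTopology F] (hc : 0 < c) {f : ℝ → ℝ³ → F}
    (hf : ContinuousOn (fun p : ℝ × ℝ³ => f p.1 p.2) (Icc 0 T ×ˢ upperHalfSpace))
    (hf_decay : IsUniformlyBigO T f (decayWeight c)) {t : ℝ} (ht : t ∈ Icc 0 T) :
    IntegrableOn (fun x => ‖f t x‖ ^ 2) channel :=
  integrableOn_channel_of_isBigO hc (aestronglyMeasurable_channel_of_continuousOn
    ((continuousOn_channel_slice hf ht).norm.pow 2)) ((hf_decay.norm_sq hc).isBigO ht)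

theorem continuousOn_integral_channel_norm_sq [SecondCountableTopology F] (hc : 0 < c)
    {f : ℝ → ℝ³ → F}
    (hf : ContinuousOn (fun p : ℝ × ℝ³ => f p.1 p.2) (Icc 0 T ×ˢ upperHalfSpace))
    (hf_decay : IsUniformlyBigO T f (decayWeight c)) :
    ContinuousOn (fun t => ∫ x in channel, ‖f t x‖ ^ 2) (Icc 0 T) := by
  obtain ⟨K, hK⟩ := (hf_decay.norm_sq hc).exists_bound
  refine continuousOn_of_dominated
    (fun t ht => aestronglyMeasurable_channel_of_continuousOn
      ((continuousOn_channel_slice hf ht).norm.pow 2))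
    (fun t ht => ae_restrict_channel_mem_openHalfSpace.mono (hK t ht))
    ((integrableOn_channel_decayWeight hc).norm.const_mul K)
    (ae_restrict_channel_mem_openHalfSpace.mono fun x hx => ?_)
  exact (hf.comp (f := fun t => (t, x)) (by fun_prop) fun t ht =>
    ⟨ht, openHalfSpace_subset_upperHalfSpace hx⟩).norm.pow 2

theorem hasDerivAt_integral_channel_sq (hc : 0 < c) {w r : ℝ → ℝ³ → ℝ}
    (hw : ∀ t ∈ Icc 0 T, AEStronglyMeasurable (w t) (volume.restrict channel))
    (hr : ∀ t ∈ Icc 0 T, AEStronglyMeasurable (r t) (volume.restrict channel))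
    (hw_decay : IsUniformlyBigO T w (decayWeight c))
    (hr_bdd : IsUniformlyBigO T r fun _ => 1)
    (hderiv : ∀ t ∈ Ioo 0 T, ∀ x ∈ openHalfSpace, HasDerivAt (fun s => w s x) (r t x) t) {t : ℝ}
    (ht : t ∈ Ioo 0 T) :
    IntegrableOn (fun x => 2 * w t x * r t x) channel ∧
      HasDerivAt (fun s => ∫ x in channel, w s x ^ 2) (∫ x in channel, 2 * w t x * r t x) t := by
  have hrate : IsUniformlyBigO T (fun s x => 2 * w s x * r s x) (decayWeight c) := by
    simpa [IsUniformlyBigO] using (hw_decay.const_mul_left 2).mul hr_bdd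
  obtain ⟨K, hK⟩ := hrate.exists_bound
  have hsq := (hw_decay.norm_sq hc).isBigO (Ioo_subset_Icc_self ht)
  refine hasDerivAt_integral_of_dominated_loc_of_deriv_le (F := fun s x => w s x ^ 2)
    (F' := fun s x => 2 * w s x * r s x) (bound := fun x => K * ‖decayWeight c x‖) (s := Ioo 0 T)
    (Ioo_mem_nhds ht.1 ht.2) ?_ ?_ ?_ ?_
    ((integrableOn_channel_decayWeight hc).norm.const_mul K) ?_
  · filter_upwards [Ioo_mem_nhds ht.1 ht.2] with s hs
    exact (hw s (Ioo_subset_Icc_self hs)).pow 2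
  · exact integrableOn_channel_of_isBigO hc ((hw t (Ioo_subset_Icc_self ht)).pow 2)
      (by simpa using hsq)
  · exact ((hw t (Ioo_subset_Icc_self ht)).const_mul 2).mul (hr t (Ioo_subset_Icc_self ht))
  · exact ae_restrict_channel_mem_openHalfSpace.mono fun x hx s hs =>
      hK s (Ioo_subset_Icc_self hs) x hx
  · refine ae_restrict_channel_mem_openHalfSpace.mono fun x hx s hs => ?_
    exact ((hderiv s hs x hx).pow 2).congr_deriv (by simp)

end TimeDependent

namespace RegC1C2

variable {T : ℝ} {F : Type*} [NormedAddCommGroup F] [NormedSpace ℝ F] {f : ℝ → ℝ³ → F}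

lemma continuousOn (hf : RegC1C2 T f) :
    ContinuousOn (fun p : ℝ × ℝ³ => f p.1 p.2) (Icc 0 T ×ˢ upperHalfSpace) :=
  hf.1.continuousOn

lemma hasDerivAt (hf : RegC1C2 T f) {t : ℝ} (ht : t ∈ Ioo 0 T) {x : ℝ³} (hx : x ∈ upperHalfSpace) :
    HasDerivAt (fun s => f s x) (derivWithin (fun s => f s x) (Icc 0 T) t) t := by
  have hslice : ContDiffOn ℝ 1 (fun s => f s x) (Icc 0 T) :=
    hf.1.comp (f := fun s => (s, x)) (by fun_prop) fun s hs => ⟨hs, hx⟩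
  exact ((hslice.differentiableOn one_ne_zero t
    (Ioo_subset_Icc_self ht)).hasDerivWithinAt).hasDerivAt (Icc_mem_nhds ht.1 ht.2)

end RegC1C2

namespace DecaysExp

variable {T C c : ℝ} {F : Type*} [NormedAddCommGroup F] [NormedSpace ℝ F] {f : ℝ → ℝ³ → F}

lemma isUniformlyBigO (hf : DecaysExp T C c f) : IsUniformlyBigO T f (decayWeight c) :=
  isBigO_principal.2 ⟨C, fun p hp => by simpa [decayWeight] using (hf p.1 hp.1 p.2 hp.2).1⟩

lemma isUniformlyBigO_fderiv (hf : DecaysExp T C c f) :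
    IsUniformlyBigO T (fun t => fderiv ℝ (f t)) (decayWeight c) :=
  isBigO_principal.2 ⟨C, fun p hp => by simpa [decayWeight] using (hf p.1 hp.1 p.2 hp.2).2.1⟩

lemma isUniformlyBigO_iteratedFDeriv (hf : DecaysExp T C c f) :
    IsUniformlyBigO T (fun t => iteratedFDeriv ℝ 2 (f t)) (decayWeight c) :=
  isBigO_principal.2 ⟨C, fun p hp => by simpa [decayWeight] using (hf p.1 hp.1 p.2 hp.2).2.2⟩

lemma isUniformlyBigO_lap3 {f : ℝ → ℝ³ → ℝ} (hf : DecaysExp T C c f) (hreg : RegC1C2 T f) :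
    IsUniformlyBigO T (fun t => lap3 (f t)) (decayWeight c) :=
  (isBigO_principal.2 ⟨3, fun p hp => norm_lap3_le
    ((hreg.2 p.1 hp.1).contDiffAt (upperHalfSpace_mem_nhds hp.2))⟩ :
      (fun p : ℝ × ℝ³ => lap3 (f p.1) p.2) =O[𝓟 (Icc 0 T ×ˢ openHalfSpace)]
        fun p => iteratedFDeriv ℝ 2 (f p.1) p.2).trans hf.isUniformlyBigO_iteratedFDeriv

end DecaysExp

/-- A temperature on `[0,T] × Ω̄` with the homogeneous Dirichlet boundary condition. -/
structure DirichletEvolution (T c : ℝ) (θ : ℝ → ℝ³ → ℝ) : Prop where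
  regC1C2 : RegC1C2 T θ
  periodic : ∀ t ∈ Icc 0 T, HorizontallyPeriodic (θ t)
  eq_zero_of_boundary : ∀ t ∈ Icc 0 T, ∀ x, x 2 = 0 → θ t x = 0
  exists_decaysExp : ∃ C, DecaysExp T C c θ

namespace DirichletEvolution

variable {T c : ℝ} {θ : ℝ → ℝ³ → ℝ}

lemma isUniformlyBigO (hθ : DirichletEvolution T c θ) : IsUniformlyBigO T θ (decayWeight c) :=
  let ⟨_, hC⟩ := hθ.exists_decaysExp
  hC.isUniformlyBigO

lemma isUniformlyBigO_fderiv (hθ : DirichletEvolution T c θ) :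
    IsUniformlyBigO T (fun t => fderiv ℝ (θ t)) (decayWeight c) :=
  let ⟨_, hC⟩ := hθ.exists_decaysExp
  hC.isUniformlyBigO_fderiv

lemma isUniformlyBigO_lap3 (hθ : DirichletEvolution T c θ) :
    IsUniformlyBigO T (fun t => lap3 (θ t)) (decayWeight c) :=
  let ⟨_, hC⟩ := hθ.exists_decaysExp
  hC.isUniformlyBigO_lap3 hθ.regC1C2

lemma profile (hθ : DirichletEvolution T c θ) {t : ℝ} (ht : t ∈ Icc 0 T) :
    DirichletProfile c (θ t) where
  contDiffOn := hθ.regC1C2.2 t ht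
  periodic := hθ.periodic t ht
  eq_zero_of_boundary := hθ.eq_zero_of_boundary t ht
  isBigO := hθ.isUniformlyBigO.isBigO ht
  fderiv_isBigO := hθ.isUniformlyBigO_fderiv.isBigO ht
  iteratedFDeriv_isBigO :=
    let ⟨_, hC⟩ := hθ.exists_decaysExp
    hC.isUniformlyBigO_iteratedFDeriv.isBigO ht

end DirichletEvolution

/-- The rate `∂_t(θ - θ_E) = νΔθ - u·∇θ + u_E·∇θ_E` dictated by the heat equation for `θ` and the
transport equation for `θ_E`, at a fixed time. -/
def gapRate (ν : ℝ) (u uE : ℝ³ → ℝ³) (θ θE : ℝ³ → ℝ) (x : ℝ³) : ℝ :=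
  ν * lap3 θ x - fderiv ℝ θ x (u x) + fderiv ℝ θE x (uE x)

lemma aestronglyMeasurable_channel_gapRate (ν : ℝ) {u uE : ℝ³ → ℝ³} {θ θE : ℝ³ → ℝ}
    (hu : ContinuousOn u openHalfSpace) (huE : ContinuousOn uE openHalfSpace)
    (hθ : ContDiffOn ℝ 2 θ openHalfSpace) (hθE : ContDiffOn ℝ 2 θE openHalfSpace) :
    AEStronglyMeasurable (gapRate ν u uE θ θE) (volume.restrict channel) :=
  have htransport {f : ℝ³ → ℝ} {v : ℝ³ → ℝ³} (hf : ContDiffOn ℝ 2 f openHalfSpace)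
      (hv : ContinuousOn v openHalfSpace) :
      AEStronglyMeasurable (fun x => fderiv ℝ f x (v x)) (volume.restrict channel) :=
    aestronglyMeasurable_channel_of_continuousOn
      ((hf.continuousOn_fderiv_of_isOpen isOpen_openHalfSpace one_le_two).clm_apply hv)
  (((measurable_lap3 θ).const_mul ν).aestronglyMeasurable.sub (htransport hθ hu)).add
    (htransport hθE huE)

lemma isBigO_clm_apply {α E F : Type*} [NormedAddCommGroup E] [NormedSpace ℝ E]
    [NormedAddCommGroup F] [NormedSpace ℝ F] {l : Filter α} (L : α → E →L[ℝ] F) (v : α → E) :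
    (fun a => L a (v a)) =O[l] fun a => ‖L a‖ * ‖v a‖ :=
  isBoundedBilinearMap_apply.isBigO_comp

lemma isUniformlyBigO_one_gapRate {T c ν : ℝ} (hc : 0 < c) {u uE : ℝ → ℝ³ → ℝ³}
    {θ θE : ℝ → ℝ³ → ℝ} (hu : IsUniformlyBigO T u (decayWeight c))
    (huE : IsUniformlyBigO T uE (decayWeight c)) (hθ : DirichletEvolution T c θ)
    (hθE : DirichletEvolution T c θE) :
    IsUniformlyBigO T (fun t => gapRate ν (u t) (uE t) (θ t) (θE t)) fun _ => 1 := by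
  have htransport {f : ℝ → ℝ³ → ℝ} {v : ℝ → ℝ³ → ℝ³} (hf : DirichletEvolution T c f)
      (hv : IsUniformlyBigO T v (decayWeight c)) :
      IsUniformlyBigO T (fun t x => fderiv ℝ (f t) x (v t x)) fun _ => 1 :=
    (isBigO_clm_apply _ _).trans <| by
      simpa using (hf.isUniformlyBigO_fderiv.bounded hc).norm_left.mul (hv.bounded hc).norm_left
  exact (((hθ.isUniformlyBigO_lap3.bounded hc).const_mul_left ν).sub (htransport hθ hu)).add
    (htransport hθE huE)

section EnergyInequality

variable {c ν M : ℝ} {u uE : ℝ³ → ℝ³} {θ θE : ℝ³ → ℝ}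

lemma two_mul_sub_mul_gapRate_le (hν : 0 ≤ ν) (hu : IncompressibleFlow u)
    (hθ : DirichletProfile c θ) (hθE : DirichletProfile c θE) {x : ℝ³} (hx : x ∈ openHalfSpace)
    (hM : ‖fderiv ℝ θE x‖ ≤ M) :
    2 * (θ x - θE x) * gapRate ν u uE θ θE x ≤
      2 * ν * div3 (fun y => (θ - θE) y • ∇ (θ - θE) y) x
        - div3 (fun y => (θ - θE) y ^ 2 • u y) x
        + (2 * (θ x - θE x) ^ 2 + M ^ 2 * ‖u x - uE x‖ ^ 2 + ν ^ 2 * lap3 θE x ^ 2) := by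
  have hw := hθ.sub hθE
  have hforcing : (fderiv ℝ θE x (u x) - fderiv ℝ θE x (uE x)) ^ 2 ≤ M ^ 2 * ‖u x - uE x‖ ^ 2 := by
    rw [← map_sub, ← mul_pow, ← sq_abs]
    gcongr
    exact (fderiv ℝ θE x).le_of_opNorm_le hM _
  have hdissipation : 0 ≤ ν * ‖fderiv ℝ (θ - θE) x‖ ^ 2 := by positivity
  rw [hw.div3_smul_gradient hx, hw.div3_sq_smul hu hx, lap3_sub (hθ.contDiffAt hx)
    (hθE.contDiffAt hx), gapRate]
  rw [fderiv_sub (hθ.differentiableAt hx) (hθE.differentiableAt hx)] at hdissipation ⊢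
  simp only [Pi.sub_apply, sub_apply]
  -- The rate is `νΔw - u·∇w + νΔθ_E - (u - u_E)·∇θ_E` with `w = θ - θ_E`; the squares are Young's
  -- inequality for the last two terms.
  nlinarith [sq_nonneg (θ x - θE x + (fderiv ℝ θE x (u x) - fderiv ℝ θE x (uE x))),
    sq_nonneg (θ x - θE x - ν * lap3 θE x)]

lemma integral_two_mul_sub_mul_gapRate_le (hc : 0 < c) (hν : 0 ≤ ν) (hu : IncompressibleFlow u)
    (hθ : DirichletProfile c θ) (hθE : DirichletProfile c θE)
    (hM : ∀ x ∈ openHalfSpace, ‖fderiv ℝ θE x‖ ≤ M)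
    (hrate : IntegrableOn (fun x => 2 * (θ x - θE x) * gapRate ν u uE θ θE x) channel)
    (hgap : IntegrableOn (fun x => (θ x - θE x) ^ 2) channel)
    (hvel : IntegrableOn (fun x => ‖u x - uE x‖ ^ 2) channel)
    (hlap : IntegrableOn (fun x => lap3 θE x ^ 2) channel) :
    ∫ x in channel, 2 * (θ x - θE x) * gapRate ν u uE θ θE x ≤
      2 * (∫ x in channel, (θ x - θE x) ^ 2) + M ^ 2 * (∫ x in channel, ‖u x - uE x‖ ^ 2)
        + ν ^ 2 * ∫ x in channel, lap3 θE x ^ 2 := by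
  have hdiffusion := (hθ.sub hθE).impermeableField_smul_gradient hc
  have htransport := (hθ.sub hθE).impermeableField_sq_smul hc hu
  have hdiv := ((hdiffusion.integrableOn_div3 hc).const_mul (2 * ν)).sub
    (htransport.integrableOn_div3 hc)
  have hquad := (hgap.const_mul 2).add (hvel.const_mul (M ^ 2))
  refine (setIntegral_mono_on hrate (hdiv.add (hquad.add (hlap.const_mul (ν ^ 2))))
    measurableSet_channel fun x hx => two_mul_sub_mul_gapRate_le hν hu hθ hθE
      (channel_subset_openHalfSpace hx) (hM x (channel_subset_openHalfSpace hx))).trans_eq ?_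
  rw [integral_add' hdiv (hquad.add (hlap.const_mul _)), integral_add' hquad (hlap.const_mul _),
    integral_add' (hgap.const_mul _) (hvel.const_mul _), integral_sub'
    ((hdiffusion.integrableOn_div3 hc).const_mul _) (htransport.integrableOn_div3 hc)]
  simp only [integral_const_mul]
  rw [hdiffusion.integral_div3_eq_zero hc, htransport.integral_div3_eq_zero hc]
  ring

end EnergyInequality

/-- A heat flow `θ` with conductivity `ν` in the velocity field `u`, and a temperature `θ_E`
transported by the velocity field `u_E` with the same initial data and with `∇θ_E`, `Δθ_E` bounded
by `M`. No boundary condition is imposed on `u`: the flux of `(θ - θ_E)² u` through `∂Ω` already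
vanishes because the temperatures do. -/
structure HeatTransportPair (T ν M c : ℝ) (u uE : ℝ → ℝ³ → ℝ³) (θ θE : ℝ → ℝ³ → ℝ) : Prop where
  nonneg_conductivity : 0 ≤ ν
  pos_decay : 0 < c
  flow : ∀ t ∈ Icc 0 T, IncompressibleFlow (u t)
  continuousOn_flow : ContinuousOn (fun p : ℝ × ℝ³ => u p.1 p.2) (Icc 0 T ×ˢ upperHalfSpace)
  continuousOn_carrier : ContinuousOn (fun p : ℝ × ℝ³ => uE p.1 p.2) (Icc 0 T ×ˢ upperHalfSpace)
  flow_isUniformlyBigO : IsUniformlyBigO T u (decayWeight c)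
  carrier_isUniformlyBigO : IsUniformlyBigO T uE (decayWeight c)
  heat : DirichletEvolution T c θ
  transported : DirichletEvolution T c θE
  heat_equation : ∀ t ∈ Icc 0 T, ∀ x ∈ openHalfSpace,
    derivWithin (fun s => θ s x) (Icc 0 T) t + fderiv ℝ (θ t) x (u t x) - ν * lap3 (θ t) x = 0
  transport_equation : ∀ t ∈ Icc 0 T, ∀ x ∈ openHalfSpace,
    derivWithin (fun s => θE s x) (Icc 0 T) t + fderiv ℝ (θE t) x (uE t x) = 0
  initial_eq : ∀ x ∈ openHalfSpace, θ 0 x = θE 0 x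
  norm_fderiv_le : ∀ t ∈ Icc 0 T, ∀ x ∈ openHalfSpace, ‖fderiv ℝ (θE t) x‖ ≤ M
  integral_lap3_sq_le : ∀ t ∈ Icc 0 T, ∫ x in channel, lap3 (θE t) x ^ 2 ≤ M ^ 2

namespace HeatTransportPair

variable {T ν M c : ℝ} {u uE : ℝ → ℝ³ → ℝ³} {θ θE : ℝ → ℝ³ → ℝ}

lemma gap_isUniformlyBigO (h : HeatTransportPair T ν M c u uE θ θE) :
    IsUniformlyBigO T (fun t x => θ t x - θE t x) (decayWeight c) :=
  h.heat.isUniformlyBigO.sub h.transported.isUniformlyBigO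

lemma continuousOn_gap (h : HeatTransportPair T ν M c u uE θ θE) :
    ContinuousOn (fun p : ℝ × ℝ³ => θ p.1 p.2 - θE p.1 p.2) (Icc 0 T ×ˢ upperHalfSpace) :=
  h.heat.regC1C2.continuousOn.sub h.transported.regC1C2.continuousOn

lemma continuousOn_velocity_gap (h : HeatTransportPair T ν M c u uE θ θE) :
    ContinuousOn (fun p : ℝ × ℝ³ => u p.1 p.2 - uE p.1 p.2) (Icc 0 T ×ˢ upperHalfSpace) :=
  h.continuousOn_flow.sub h.continuousOn_carrier

lemma velocity_gap_isUniformlyBigO (h : HeatTransportPair T ν M c u uE θ θE) :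
    IsUniformlyBigO T (fun t x => u t x - uE t x) (decayWeight c) :=
  h.flow_isUniformlyBigO.sub h.carrier_isUniformlyBigO

lemma hasDerivAt_gap (h : HeatTransportPair T ν M c u uE θ θE) {t : ℝ} (ht : t ∈ Ioo 0 T) {x : ℝ³}
    (hx : x ∈ openHalfSpace) :
    HasDerivAt (fun s => θ s x - θE s x) (gapRate ν (u t) (uE t) (θ t) (θE t) x) t := by
  have hx' := openHalfSpace_subset_upperHalfSpace hx
  refine ((h.heat.regC1C2.hasDerivAt ht hx').sub
    (h.transported.regC1C2.hasDerivAt ht hx')).congr_deriv ?_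
  have hheat := h.heat_equation t (Ioo_subset_Icc_self ht) x hx
  have htransport := h.transport_equation t (Ioo_subset_Icc_self ht) x hx
  simp only [gapRate]
  linarith

lemma continuousOn_integral_velocity_gap_sq (h : HeatTransportPair T ν M c u uE θ θE) :
    ContinuousOn (fun t => ∫ x in channel, ‖u t x - uE t x‖ ^ 2) (Icc 0 T) :=
  continuousOn_integral_channel_norm_sq h.pos_decay h.continuousOn_velocity_gap
    h.velocity_gap_isUniformlyBigO

lemma continuousOn_integral_gap_sq (h : HeatTransportPair T ν M c u uE θ θE) :
    ContinuousOn (fun t => ∫ x in channel, (θ t x - θE t x) ^ 2) (Icc 0 T) := by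
  simpa using continuousOn_integral_channel_norm_sq h.pos_decay h.continuousOn_gap
    h.gap_isUniformlyBigO

lemma hasDerivAt_integral_gap_sq (h : HeatTransportPair T ν M c u uE θ θE) {t : ℝ}
    (ht : t ∈ Ioo 0 T) :
    IntegrableOn (fun x => 2 * (θ t x - θE t x) * gapRate ν (u t) (uE t) (θ t) (θE t) x) channel ∧
      HasDerivAt (fun s => ∫ x in channel, (θ s x - θE s x) ^ 2)
        (∫ x in channel, 2 * (θ t x - θE t x) * gapRate ν (u t) (uE t) (θ t) (θE t) x) t :=
  hasDerivAt_integral_channel_sq (w := fun s x => θ s x - θE s x) h.pos_decay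
    (fun _ hs => aestronglyMeasurable_channel_of_continuousOn
      (continuousOn_channel_slice (f := fun s x => θ s x - θE s x) h.continuousOn_gap hs))
    (fun _ hs => aestronglyMeasurable_channel_gapRate ν
      (continuousOn_channel_slice h.continuousOn_flow hs)
      (continuousOn_channel_slice h.continuousOn_carrier hs)
      ((h.heat.profile hs).contDiffOn.mono openHalfSpace_subset_upperHalfSpace)
      ((h.transported.profile hs).contDiffOn.mono openHalfSpace_subset_upperHalfSpace))
    h.gap_isUniformlyBigO
    (isUniformlyBigO_one_gapRate h.pos_decay h.flow_isUniformlyBigO h.carrier_isUniformlyBigO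
      h.heat h.transported)
    (fun _ hs _ hx => h.hasDerivAt_gap hs hx) ht

theorem energy_inequality (h : HeatTransportPair T ν M c u uE θ θE) {t : ℝ} (ht : t ∈ Ioo 0 T) :
    ∫ x in channel, 2 * (θ t x - θE t x) * gapRate ν (u t) (uE t) (θ t) (θE t) x ≤
      2 * (∫ x in channel, (θ t x - θE t x) ^ 2)
        + (M ^ 2 * (∫ x in channel, ‖u t x - uE t x‖ ^ 2) + ν ^ 2 * M ^ 2) := by
  have htI := Ioo_subset_Icc_self ht
  have hθE := h.transported.profile htI
  have hgap := integrableOn_channel_norm_sq h.pos_decay h.continuousOn_gap h.gap_isUniformlyBigO htI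
  have hvel := integrableOn_channel_norm_sq h.pos_decay h.continuousOn_velocity_gap
    h.velocity_gap_isUniformlyBigO htI
  have hlap : IntegrableOn (fun x => lap3 (θE t) x ^ 2) channel :=
    integrableOn_channel_of_isBigO h.pos_decay
      ((measurable_lap3 (θE t)).pow_const 2).aestronglyMeasurable
      (by simpa using (h.transported.isUniformlyBigO_lap3.norm_sq h.pos_decay).isBigO htI)
  have henergy := integral_two_mul_sub_mul_gapRate_le h.pos_decay h.nonneg_conductivity
    (h.flow t htI) (h.heat.profile htI) hθE (h.norm_fderiv_le t htI)
    (h.hasDerivAt_integral_gap_sq ht).1 (by simpa using hgap) hvel hlap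
  linarith [mul_le_mul_of_nonneg_left (h.integral_lap3_sq_le t htI) (sq_nonneg ν)]

theorem integral_gap_sq_le (h : HeatTransportPair T ν M c u uE θ θE) {t : ℝ} (ht : t ∈ Icc 0 T) :
    ∫ x in channel, (θ t x - θE t x) ^ 2 ≤
      exp (2 * t) * (M ^ 2 * (∫ s in Icc 0 T, ∫ x in channel, ‖u s x - uE s x‖ ^ 2)
        + ν ^ 2 * M ^ 2 * T) := by
  have hsub : Icc 0 t ⊆ Icc 0 T := Icc_subset_Icc_right ht.2
  have hT : 0 ≤ T := ht.1.trans ht.2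
  let φ s := M ^ 2 * (∫ x in channel, ‖u s x - uE s x‖ ^ 2) + ν ^ 2 * M ^ 2
  have hφ_nonneg : ∀ s, 0 ≤ φ s := fun s => by positivity
  have hvel := h.continuousOn_integral_velocity_gap_sq.integrableOn_Icc (μ := volume)
  have hconst : IntegrableOn (fun _ => ν ^ 2 * M ^ 2) (Icc 0 T) :=
    continuousOn_const.integrableOn_Icc
  have hφ : IntegrableOn φ (Icc 0 T) := (hvel.const_mul _).add hconst
  have hinitial : ∫ x in channel, (θ 0 x - θE 0 x) ^ 2 = 0 :=
    setIntegral_eq_zero_of_forall_eq_zero fun x hx => by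
      simp [h.initial_eq x (channel_subset_openHalfSpace hx)]
  have hgronwall := le_exp_mul_of_deriv_le zero_le_two ht.1
    (h.continuousOn_integral_gap_sq.mono hsub)
    (fun s hs => (h.hasDerivAt_integral_gap_sq (Ioo_subset_Ioo_right ht.2 hs)).2)
    (hφ.mono_set hsub) (fun s _ => hφ_nonneg s)
    (fun s hs => h.energy_inequality (Ioo_subset_Ioo_right ht.2 hs))
  rw [hinitial, zero_add, sub_zero] at hgronwall
  refine hgronwall.trans (mul_le_mul_of_nonneg_left ?_ (exp_pos _).le)
  calc ∫ s in (0)..t, φ s = ∫ s in Icc 0 t, φ s := by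
        rw [intervalIntegral.integral_of_le ht.1, integral_Icc_eq_integral_Ioc]
    _ ≤ ∫ s in Icc 0 T, φ s :=
        setIntegral_mono_set hφ (.of_forall hφ_nonneg) hsub.eventuallyLE
    _ = M ^ 2 * (∫ s in Icc 0 T, ∫ x in channel, ‖u s x - uE s x‖ ^ 2) + ν ^ 2 * M ^ 2 * T := by
        rw [integral_add (hvel.const_mul _) hconst, integral_const_mul]
        simp [hT, mul_comm]

end HeatTransportPair

theorem heat_flow_convergence_general {ηc M T κ c : ℝ} {u uE : ℝ → ℝ³ → ℝ³} {θ θE : ℝ → ℝ³ → ℝ}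
    (h : HeatTransportPair T (κ * ηc) M c u uE θ θE) {t : ℝ} (ht : t ∈ Icc 0 T) :
    ∫ x in channel, (θ t x - θE t x) ^ 2 ≤
      (M ^ 2 + ηc ^ 2 * M ^ 2 + 2) * exp ((M ^ 2 + ηc ^ 2 * M ^ 2 + 2) * T) *
        ((∫ s in Icc 0 T, ∫ x in channel, ‖u s x - uE s x‖ ^ 2) + κ ^ 2 * T) := by
  have hT : 0 ≤ T := ht.1.trans ht.2
  set V := ∫ s in Icc 0 T, ∫ x in channel, ‖u s x - uE s x‖ ^ 2
  have : 0 ≤ V := integral_nonneg fun s => integral_nonneg fun x => by positivity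
  set C' := M ^ 2 + ηc ^ 2 * M ^ 2 + 2
  have hM_le : M ^ 2 ≤ C' := by simp only [C']; nlinarith [sq_nonneg (ηc * M)]
  have hηM_le : ηc ^ 2 * M ^ 2 ≤ C' := by simp only [C']; nlinarith [sq_nonneg M]
  have htwo_le : 2 ≤ C' := by simp only [C']; nlinarith [sq_nonneg M, sq_nonneg (ηc * M)]
  calc ∫ x in channel, (θ t x - θE t x) ^ 2
      ≤ exp (2 * t) * (M ^ 2 * V + (κ * ηc) ^ 2 * M ^ 2 * T) := h.integral_gap_sq_le ht
    _ = exp (2 * t) * (M ^ 2 * V + (ηc ^ 2 * M ^ 2) * (κ ^ 2 * T)) := by ring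
    _ ≤ exp (C' * T) * (C' * V + C' * (κ ^ 2 * T)) := by
        gcongr
        exacts [ht.1, ht.2]
    _ = C' * exp (C' * T) * (V + κ ^ 2 * T) := by ring

/-- Quantitative convergence of the heat flow of the Navier–Stokes–Fourier system to the
transported heat of the Euler system: there is a constant `C′`, depending only on `M` and
`η_c`, such that under hypotheses (i)–(v),
`sup_{0≤t≤T} ‖(θ−θ_E)(t)‖²_{L²(Ω)} ≤ C′ e^{C′T} ( ∫₀^T ‖(u−u_E)(t)‖²_{L²(Ω)} dt + κ²T )`. -/
theorem heat_flow_convergence (ηc M : ℝ) (hηc : 0 < ηc) (hM : 0 ≤ M) :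
    ∃ C' : ℝ, 0 < C' ∧
      ∀ (T κ : ℝ)
        (u uE : ℝ → EuclideanSpace ℝ (Fin 3) → EuclideanSpace ℝ (Fin 3))
        (θ θE : ℝ → EuclideanSpace ℝ (Fin 3) → ℝ) (C c : ℝ),
        0 < T → 0 < κ → 0 < C → 0 < c →
        (∀ t ∈ Icc (0 : ℝ) T, HorizontallyPeriodic (u t) ∧ HorizontallyPeriodic (uE t) ∧
          HorizontallyPeriodic (θ t) ∧ HorizontallyPeriodic (θE t)) →
        RegC1C2 T u → RegC1C2 T uE → RegC1C2 T θ → RegC1C2 T θE →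
        DecaysExp T C c u → DecaysExp T C c uE → DecaysExp T C c θ → DecaysExp T C c θE →
        -- (i) incompressibility and no-slip boundary condition for `u`
        (∀ t ∈ Icc (0 : ℝ) T, ∀ x : EuclideanSpace ℝ (Fin 3), 0 < x 2 → div3 (u t) x = 0) →
        (∀ t ∈ Icc (0 : ℝ) T, ∀ x : EuclideanSpace ℝ (Fin 3), x 2 = 0 → u t x = 0) →
        -- (ii) heat equation with Dirichlet boundary condition for `θ`
        (∀ t ∈ Icc (0 : ℝ) T, ∀ x : EuclideanSpace ℝ (Fin 3), 0 < x 2 →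
          derivWithin (fun s => θ s x) (Icc 0 T) t + fderiv ℝ (θ t) x (u t x) -
            κ * ηc * lap3 (θ t) x = 0) →
        (∀ t ∈ Icc (0 : ℝ) T, ∀ x : EuclideanSpace ℝ (Fin 3), x 2 = 0 → θ t x = 0) →
        -- (iii) transport equation with Dirichlet boundary condition for `θ_E`
        (∀ t ∈ Icc (0 : ℝ) T, ∀ x : EuclideanSpace ℝ (Fin 3), 0 < x 2 →
          derivWithin (fun s => θE s x) (Icc 0 T) t + fderiv ℝ (θE t) x (uE t x) = 0) →
        (∀ t ∈ Icc (0 : ℝ) T, ∀ x : EuclideanSpace ℝ (Fin 3), x 2 = 0 → θE t x = 0) →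
        -- (iv) same initial data
        (∀ x : EuclideanSpace ℝ (Fin 3), θ 0 x = θE 0 x) →
        -- (v) bounds on `∇θ_E` in `L^∞` and `Δθ_E` in `L²`
        (∀ t ∈ Icc (0 : ℝ) T, ∀ x : EuclideanSpace ℝ (Fin 3), 0 < x 2 →
          ‖fderiv ℝ (θE t) x‖ ≤ M) →
        (∀ t ∈ Icc (0 : ℝ) T, (∫ x in channel, (lap3 (θE t) x) ^ 2) ≤ M ^ 2) →
        ∀ t ∈ Icc (0 : ℝ) T,
          (∫ x in channel, (θ t x - θE t x) ^ 2) ≤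
            C' * Real.exp (C' * T) *
              ((∫ s in Icc (0 : ℝ) T, ∫ x in channel, ‖u s x - uE s x‖ ^ 2) + κ ^ 2 * T) := by
  refine ⟨M ^ 2 + ηc ^ 2 * M ^ 2 + 2, by positivity, ?_⟩
  intro T κ u uE θ θE C c _ hκ _ hc hper hu huE hθ hθE hu_decay huE_decay hθ_decay hθE_decay hdiv
    _ hheat hθ_bdry htransport hθE_bdry hinit hgrad hlap t ht
  have hflow : ∀ s ∈ Icc 0 T, IncompressibleFlow (u s) := fun s hs =>
    { differentiableOn :=
        ((hu.2 s hs).differentiableOn two_ne_zero).mono openHalfSpace_subset_upperHalfSpace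
      periodic := (hper s hs).1
      isBigO_one := (hu_decay.isUniformlyBigO.bounded hc).isBigO hs
      fderiv_isBigO_one := (hu_decay.isUniformlyBigO_fderiv.bounded hc).isBigO hs
      div3_eq_zero := hdiv s hs }
  have hheat_evolution : DirichletEvolution T c θ :=
    ⟨hθ, fun s hs => (hper s hs).2.2.1, hθ_bdry, C, hθ_decay⟩
  have htransported : DirichletEvolution T c θE :=
    ⟨hθE, fun s hs => (hper s hs).2.2.2, hθE_bdry, C, hθE_decay⟩
  have hpair : HeatTransportPair T (κ * ηc) M c u uE θ θE :=
    ⟨by positivity, hc, hflow, hu.continuousOn, huE.continuousOn, hu_decay.isUniformlyBigO,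
      huE_decay.isUniformlyBigO, hheat_evolution, htransported, hheat, htransport,
      fun x _ => hinit x, hgrad, hlap⟩
  exact heat_flow_convergence_general hpair ht
end
end
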